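/- arXiv:1905.12312 — 2 statements merged into one kernel-verified Lean document; each statement's English description precedes it below -/
import Mathlib

section
/- The Wronskian Hermite polynomials satisfy, for any non-empty partition λ: F_λ·He_λ(x) = x·Σ_{μ⋖λ} F_μ·He_μ(x) − (|λ|−1)·Σ_{ρ∈R₂⁻(λ)} (−1)^{ht(λ/ρ)}·F_ρ·He_ρ(x). -/
open Polynomial Finset

/-- `AddBox μ lam` means the Young diagram `lam` is obtained from `μ` by adding one box,
i.e. `μ ⋖ lam` in the Young lattice. -/
def AddBox (μ lam : YoungDiagram) : Prop := μ ≤ lam ∧ lam.card = μ.card + 1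

/-- The sum of the contents (column − row) of the boxes of `lam` not in `μ`;
when `lam/μ` is a single box this is the content of that box. -/
def skewContent (lam μ : YoungDiagram) : ℤ :=
  ∑ c ∈ lam.cells \ μ.cells, ((c.2 : ℤ) - (c.1 : ℤ))

/-- `F μ`: the number of standard Young tableaux of shape `μ`, i.e. bijective fillings of the
cells of `μ` by `0, …, |μ|-1` that increase along rows and columns. -/
noncomputable def SYTCount (μ : YoungDiagram) : ℕ :=
  Nat.card {T : μ.cells ≃ Fin μ.card //
    ∀ a b : μ.cells, (a : ℕ × ℕ).1 ≤ (b : ℕ × ℕ).1 → (a : ℕ × ℕ).2 ≤ (b : ℕ × ℕ).2 →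
      (T a : ℕ) ≤ (T b : ℕ)}

/-- `lam` is obtained from `ρ` by adding a horizontal domino. -/
def AddDominoH (ρ lam : YoungDiagram) : Prop :=
  ρ ≤ lam ∧ ∃ i j : ℕ, lam.cells \ ρ.cells = {(i, j), (i, j + 1)}

/-- `lam` is obtained from `ρ` by adding a vertical domino. -/
def AddDominoV (ρ lam : YoungDiagram) : Prop :=
  ρ ≤ lam ∧ ∃ i j : ℕ, lam.cells \ ρ.cells = {(i, j), (i + 1, j)}

/-- The number of (nonempty) rows of a Young diagram. -/
def nrows (μ : YoungDiagram) : ℕ := μ.colLen 0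

/-- The degree vector of a partition: `n_i = λ_i + r - i` (here `0`-indexed). -/
def degVec (μ : YoungDiagram) (i : Fin (nrows μ)) : ℕ :=
  μ.rowLen i + (nrows μ - 1 - (i : ℕ))

/-- Probabilists' Hermite polynomials: `He_0 = 1`, `He_1 = x`,
`He_n = x He_{n-1} - (n-1) He_{n-2}`. -/
noncomputable def He : ℕ → Polynomial ℝ
  | 0 => 1
  | 1 => X
  | (n + 2) => X * He (n + 1) - C ((n : ℝ) + 1) * He n

/-- The Wronskian of a family of polynomials. -/
noncomputable def Wr {r : ℕ} (p : Fin r → Polynomial ℝ) : Polynomial ℝ :=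
  Matrix.det (Matrix.of fun i j : Fin r => derivative^[(i : ℕ)] (p j))

/-- The Wronskian Hermite polynomial
`He_μ = Wr[He_{n_1}, …, He_{n_r}] / ∏_{i<j} (n_j - n_i)`. -/
noncomputable def HeW (μ : YoungDiagram) : Polynomial ℝ :=
  C (∏ p ∈ Finset.univ.filter (fun p : Fin (nrows μ) × Fin (nrows μ) => p.1 < p.2),
        ((degVec μ p.2 : ℝ) - (degVec μ p.1 : ℝ)))⁻¹
    * Wr (fun i => He (degVec μ i))

/-!
Put `h_k = He_k / k!`. Up to one and the same factor, the Wronskian of the `He_{n_i}` is the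
Jacobi–Trudi determinant `s_λ[h]`, and the product of the differences of the degree vector (a
Vandermonde determinant, written in the basis of falling factorials) is `s_λ[1/k!]`. Since
`F_λ = |λ|! s_λ[1/k!]`, the factor cancels and `F_λ He_λ = |λ|! s_λ[h]`.

The generating function `exp (x t - t² / 2)` of `h` satisfies a differential equation that reads
`k h_k = x h_{k-1} - h_{k-2}`. Multiplying each entry `h_k` of the determinant by its degree `k`,
one column at a time, and summing over the columns multiplies `s_λ[h]` by `|λ|`, so `|λ| s_λ[h]` is
a combination of determinants in which one shifted part `λ_j - j` is lowered by one or two. Such a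
determinant has a repeated or zero column, or it belongs to a box or horizontal domino removal, or
an adjacent swap of columns, whence the sign, turns it into one for a vertical domino removal. With
`1/k!` in place of `h_k` only box removals survive, and the result is the recursion defining `F_λ`.
-/

section Numbering

variable {α : Type*} [DecidableEq α] {s : Finset α} {n : ℕ}

/-- Restriction of a numbering to the complement of the element `x` with the largest number. -/
def eraseLast (T : s ≃ Fin (n + 1)) (x : s) (hx : T x = Fin.last n) : s.erase (x : α) ≃ Fin n where
  toFun y := (T ⟨y, mem_of_mem_erase y.2⟩).castPred fun h =>
    ne_of_mem_erase y.2 (congrArg Subtype.val (T.injective (h.trans hx.symm)))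
  invFun k := ⟨T.symm k.castSucc, mem_erase.2 ⟨fun h => (Fin.castSucc_lt_last k).ne <| by
    rw [← hx, ← Subtype.ext h, T.apply_symm_apply], (T.symm k.castSucc).2⟩⟩
  left_inv y := by simp
  right_inv k := by simp

/-- Extension of a numbering of `s \ {x}` giving `x` the largest number. -/
def insertLast (x : s) (T : s.erase (x : α) ≃ Fin n) : s ≃ Fin (n + 1) where
  toFun y := if h : y = x then Fin.last n
    else (T ⟨y, mem_erase.2 ⟨fun h' => h (Subtype.ext h'), y.2⟩⟩).castSucc
  invFun k := Fin.lastCases (motive := fun _ => s) x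
    (fun k => ⟨T.symm k, mem_of_mem_erase (T.symm k).2⟩) k
  left_inv y := by by_cases h : y = x <;> simp [h]
  right_inv k := by
    refine Fin.lastCases (by simp) (fun k => ?_) k
    have hne : (⟨T.symm k, mem_of_mem_erase (T.symm k).2⟩ : s) ≠ x := fun h =>
      ne_of_mem_erase (T.symm k).2 (congrArg Subtype.val h)
    simp [hne]

theorem insertLast_self (x : s) (T : s.erase (x : α) ≃ Fin n) : insertLast x T x = Fin.last n := by
  simp [insertLast]

theorem insertLast_eraseLast (T : s ≃ Fin (n + 1)) (x : s) (hx : T x = Fin.last n) :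
    insertLast x (eraseLast T x hx) = T := by
  ext y
  by_cases h : y = x
  · simp [insertLast, h, hx]
  · simp [insertLast, eraseLast, h]

theorem eraseLast_insertLast (x : s) (T : s.erase (x : α) ≃ Fin n) :
    eraseLast (insertLast x T) x (insertLast_self x T) = T := by
  ext y
  have hne : (⟨y, mem_of_mem_erase y.2⟩ : s) ≠ x := fun h =>
    ne_of_mem_erase y.2 (congrArg Subtype.val h)
  simp [insertLast, eraseLast, hne]

end Numbering

section MonotoneNumbering

variable {α : Type*} [PartialOrder α] {s : Finset α} {n : ℕ}

/-- The order-preserving numberings of a finite set `s` by `0, …, n - 1`, i.e. the linear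
extensions of `s`. The number `n` is not tied to the cardinality of `s`, which avoids casts when
elements are erased; there is no numbering unless the two agree. -/
def MonotoneNumbering (s : Finset α) (n : ℕ) : Type _ := {T : s ≃ Fin n // Monotone T}

instance : Finite (MonotoneNumbering s n) := by
  unfold MonotoneNumbering
  infer_instance

theorem card_monotoneNumbering_empty : Nat.card (MonotoneNumbering (∅ : Finset α) 0) = 1 := by
  refine Nat.card_eq_one_iff_unique.2 ⟨⟨fun T T' => ?_⟩, ⟨⟨Equiv.equivOfIsEmpty _ _, ?_⟩⟩⟩
  · exact Subtype.ext (Equiv.ext fun y => absurd y.2 (notMem_empty _))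
  · exact fun y => absurd y.2 (notMem_empty _)

theorem MonotoneNumbering.maximal_of_apply_eq_last (T : MonotoneNumbering s (n + 1)) {x : s}
    (hx : T.1 x = Fin.last n) : Maximal (· ∈ s) (x : α) := by
  refine ⟨x.2, fun y hy hxy => ?_⟩
  have hy_last : T.1 ⟨y, hy⟩ = Fin.last n := Fin.last_le_iff.1 (hx ▸ T.2 (Subtype.mk_le_mk.2 hxy))
  exact (congrArg Subtype.val (T.1.injective (hy_last.trans hx.symm))).le

variable [DecidableEq α]

theorem monotone_eraseLast {T : s ≃ Fin (n + 1)} (hT : Monotone T) {x : s}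
    (hx : T x = Fin.last n) : Monotone (eraseLast T x hx) := by
  intro y z hyz
  have hle : T ⟨y, mem_of_mem_erase y.2⟩ ≤ T ⟨z, mem_of_mem_erase z.2⟩ :=
    hT (Subtype.mk_le_mk.2 hyz)
  simpa [eraseLast] using hle

theorem monotone_insertLast {x : s} (hx : Maximal (· ∈ s) (x : α)) {T : s.erase (x : α) ≃ Fin n}
    (hT : Monotone T) : Monotone (insertLast x T) := by
  intro y z hyz
  by_cases hz : z = x
  · simp [insertLast, hz, Fin.le_last]
  · have hy : y ≠ x := fun h => hz (Subtype.ext (hx.eq_of_le z.2 (h ▸ hyz)).symm)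
    simpa [insertLast, hy, hz] using hT (Subtype.mk_le_mk.2 hyz)

/-- Numberings of `s` in which a maximal element `x` comes last are numberings of `s \ {x}`. -/
def eraseLastEquiv {x : s} (hx : Maximal (· ∈ s) (x : α)) :
    {T : MonotoneNumbering s (n + 1) // T.1 x = Fin.last n} ≃
      MonotoneNumbering (s.erase (x : α)) n where
  toFun T := ⟨eraseLast T.1.1 x T.2, monotone_eraseLast T.1.2 T.2⟩
  invFun T := ⟨⟨insertLast x T.1, monotone_insertLast hx T.2⟩, insertLast_self x T.1⟩
  left_inv T := Subtype.ext (Subtype.ext (insertLast_eraseLast T.1.1 x T.2))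
  right_inv T := Subtype.ext (eraseLast_insertLast x T.1)

open Classical in
theorem card_monotoneNumbering_succ (s : Finset α) (n : ℕ) :
    Nat.card (MonotoneNumbering s (n + 1)) =
      ∑ x ∈ s with Maximal (· ∈ s) x, Nat.card (MonotoneNumbering (s.erase x) n) := by
  have card_fiber (x : s) :
      Nat.card {T : MonotoneNumbering s (n + 1) // T.1.symm (Fin.last n) = x} =
        if Maximal (· ∈ s) (x : α)
          then Nat.card (MonotoneNumbering (s.erase (x : α)) n) else 0 := by
    simp_rw [Equiv.symm_apply_eq, eq_comm (a := Fin.last n)]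
    split_ifs with hx
    · exact Nat.card_congr (eraseLastEquiv hx)
    · have : IsEmpty {T : MonotoneNumbering s (n + 1) // T.1 x = Fin.last n} :=
        ⟨fun T => hx (T.1.maximal_of_apply_eq_last T.2)⟩
      exact Nat.card_of_isEmpty
  rw [← Nat.card_congr (Equiv.sigmaFiberEquiv fun T : MonotoneNumbering s (n + 1) =>
    T.1.symm (Fin.last n)), Nat.card_sigma, sum_congr rfl fun x _ => card_fiber x,
    sum_coe_sort s fun x => if Maximal (· ∈ s) x
      then Nat.card (MonotoneNumbering (s.erase x) n) else 0, sum_filter]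

end MonotoneNumbering

section YoungDiagram

variable {μ lam : YoungDiagram}

theorem lt_nrows_iff {i : ℕ} : i < nrows μ ↔ 0 < μ.rowLen i := by
  rw [nrows, ← YoungDiagram.mem_iff_lt_colLen, YoungDiagram.mem_iff_lt_rowLen]

theorem rowLen_le_rowLen_of_le (h : μ ≤ lam) (i : ℕ) : μ.rowLen i ≤ lam.rowLen i :=
  le_of_forall_lt fun _ hj =>
    YoungDiagram.mem_iff_lt_rowLen.1 (h (YoungDiagram.mem_iff_lt_rowLen.2 hj))

theorem nrows_le_nrows_of_le (h : μ ≤ lam) : nrows μ ≤ nrows lam :=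
  le_of_forall_lt fun i hi =>
    lt_nrows_iff.2 ((lt_nrows_iff.1 hi).trans_le (rowLen_le_rowLen_of_le h i))

theorem card_eq_sum_rowLen (μ : YoungDiagram) : μ.card = ∑ i ∈ range (nrows μ), μ.rowLen i := by
  have fst_mem : ∀ c ∈ μ.cells, c.1 ∈ range (nrows μ) := fun c hc =>
    mem_range.2 (lt_nrows_iff.2 (Nat.zero_lt_of_lt (YoungDiagram.mem_iff_lt_rowLen.1 hc)))
  rw [YoungDiagram.card, card_eq_sum_card_fiberwise fst_mem]
  exact sum_congr rfl fun i _ => μ.rowLen_eq_card.symm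

theorem card_eq_zero_iff_eq_bot : μ.card = 0 ↔ μ = ⊥ := by
  rw [YoungDiagram.card, Finset.card_eq_zero, ← YoungDiagram.cells_bot, YoungDiagram.ext_iff]

theorem nrows_bot : nrows ⊥ = 0 := by
  by_contra h
  exact YoungDiagram.notMem_bot (0, 0)
    (YoungDiagram.mem_iff_lt_rowLen.2 (lt_nrows_iff.1 (Nat.pos_of_ne_zero h)))

/-- The diagram left after deleting from `lam` every box weakly south-east of `c`. Removals of a box
and of a domino are the special cases in which only one or two boxes are deleted. -/
def removeAbove (lam : YoungDiagram) (c : ℕ × ℕ) : YoungDiagram where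
  cells := lam.cells.filter (¬ c ≤ ·)
  isLowerSet a b hba ha := by
    simp only [coe_filter, Set.mem_ofPred_eq] at ha ⊢
    exact ⟨lam.isLowerSet hba ha.1, fun hcb => ha.2 (hcb.trans hba)⟩

theorem cells_removeAbove (lam : YoungDiagram) (c : ℕ × ℕ) :
    (removeAbove lam c).cells = lam.cells \ lam.cells.filter (c ≤ ·) :=
  filter_not _ _

theorem mem_removeAbove {c d : ℕ × ℕ} : d ∈ removeAbove lam c ↔ d ∈ lam ∧ ¬ c ≤ d := by
  rw [← YoungDiagram.mem_cells, removeAbove, mem_filter, YoungDiagram.mem_cells]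

theorem removeAbove_le (lam : YoungDiagram) (c : ℕ × ℕ) : removeAbove lam c ≤ lam :=
  fun _ hd => (mem_removeAbove.1 hd).1

theorem injOn_removeAbove (lam : YoungDiagram) : Set.InjOn (removeAbove lam) lam.cells := by
  have corner_le {c d : ℕ × ℕ} (hc : c ∈ lam.cells) (h : removeAbove lam c = removeAbove lam d) :
      d ≤ c := by
    by_contra hdc
    exact (mem_removeAbove.1 (h ▸ mem_removeAbove.2 ⟨hc, hdc⟩ : c ∈ removeAbove lam c)).2 le_rfl
  exact fun c hc d hd h => le_antisymm (corner_le hd h.symm) (corner_le hc h)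

theorem rowLen_removeAbove (lam : YoungDiagram) (i j k : ℕ) :
    (removeAbove lam (i, j)).rowLen k =
      if i ≤ k then min (lam.rowLen k) j else lam.rowLen k := by
  refine eq_of_forall_lt_iff fun x => ?_
  rw [← YoungDiagram.mem_iff_lt_rowLen, mem_removeAbove, YoungDiagram.mem_iff_lt_rowLen]
  split_ifs with h <;> simp [h]

theorem le_and_sdiff_cells_eq_iff {S : Finset (ℕ × ℕ)} {c : ℕ × ℕ} (hc : IsLeast (S : Set _) c) :
    μ ≤ lam ∧ lam.cells \ μ.cells = S ↔
      lam.cells.filter (c ≤ ·) = S ∧ μ = removeAbove lam c := by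
  constructor
  · rintro ⟨hle, rfl⟩
    have mem_sdiff_iff (d : ℕ × ℕ) : d ∈ lam.cells \ μ.cells ↔ d ∈ lam.cells ∧ c ≤ d := by
      refine ⟨fun hd => ⟨(mem_sdiff.1 hd).1, hc.2 hd⟩, fun hd => mem_sdiff.2 ⟨hd.1, fun hdμ => ?_⟩⟩
      exact (mem_sdiff.1 hc.1).2 (μ.isLowerSet hd.2 hdμ)
    refine ⟨by ext d; rw [mem_filter, mem_sdiff_iff], YoungDiagram.ext ?_⟩
    rw [cells_removeAbove, ← Finset.sdiff_sdiff_eq_self (YoungDiagram.cells_subset_iff.2 hle)]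
    congr 1
    ext d
    rw [mem_filter, mem_sdiff_iff]
  · rintro ⟨rfl, rfl⟩
    refine ⟨removeAbove_le lam c, ?_⟩
    rw [cells_removeAbove, Finset.sdiff_sdiff_eq_self (filter_subset _ _)]

theorem addBox_iff_exists_cells_sdiff :
    AddBox μ lam ↔ ∃ c, μ ≤ lam ∧ lam.cells \ μ.cells = {c} := by
  rw [exists_and_left, AddBox, ← card_eq_one]
  refine and_congr_right fun hle => ?_
  have := card_sdiff_add_card_eq_card (YoungDiagram.cells_subset_iff.2 hle)
  unfold YoungDiagram.card
  omega

theorem filter_le_eq_singleton_iff_maximal {c : ℕ × ℕ} :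
    lam.cells.filter (c ≤ ·) = {c} ↔ Maximal (· ∈ lam.cells) c := by
  rw [Finset.ext_iff]
  refine ⟨fun h => ⟨(mem_filter.1 ((h c).2 (mem_singleton_self c))).1, fun d hd hcd => ?_⟩,
    fun h d => ?_⟩
  · exact (mem_singleton.1 ((h d).1 (mem_filter.2 ⟨hd, hcd⟩))).le
  · rw [mem_filter, mem_singleton]
    exact ⟨fun hd => (h.eq_of_le hd.1 hd.2).symm, by rintro rfl; exact ⟨h.prop, le_rfl⟩⟩

theorem addBox_iff_exists_maximal :
    AddBox μ lam ↔ ∃ c, Maximal (· ∈ lam.cells) c ∧ μ = removeAbove lam c := by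
  rw [addBox_iff_exists_cells_sdiff]
  refine exists_congr fun c => ?_
  have isLeast_self : IsLeast (({c} : Finset (ℕ × ℕ)) : Set (ℕ × ℕ)) c := by simp
  rw [le_and_sdiff_cells_eq_iff isLeast_self, filter_le_eq_singleton_iff_maximal]

theorem filter_le_eq_iff_forall_rowLen {S : Finset (ℕ × ℕ)} {i j : ℕ} :
    lam.cells.filter ((i, j) ≤ ·) = S ↔
      ∀ k x, x < lam.rowLen k ∧ i ≤ k ∧ j ≤ x ↔ (k, x) ∈ S := by
  simp only [Finset.ext_iff, Prod.forall, mem_filter, YoungDiagram.mem_cells,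
    YoungDiagram.mem_iff_lt_rowLen, Prod.mk_le_mk]

theorem filter_le_eq_singleton_iff {i j : ℕ} :
    lam.cells.filter ((i, j) ≤ ·) = {(i, j)} ↔
      lam.rowLen i = j + 1 ∧ lam.rowLen (i + 1) ≤ j := by
  simp only [filter_le_eq_iff_forall_rowLen, mem_singleton, Prod.mk.injEq]
  refine ⟨fun h => ?_, fun h k x => ?_⟩
  · have := h i j
    have := h i (j + 1)
    have := h (i + 1) j
    omega
  · obtain hk | rfl | hk := lt_trichotomy k i
    · omega
    · omega
    · have := lam.rowLen_anti (i + 1) k hk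
      omega

theorem filter_le_eq_horizontal_iff {i j : ℕ} :
    lam.cells.filter ((i, j) ≤ ·) = {(i, j), (i, j + 1)} ↔
      lam.rowLen i = j + 2 ∧ lam.rowLen (i + 1) ≤ j := by
  simp only [filter_le_eq_iff_forall_rowLen, mem_insert, mem_singleton, Prod.mk.injEq]
  refine ⟨fun h => ?_, fun h k x => ?_⟩
  · have := h i (j + 1)
    have := h i (j + 2)
    have := h (i + 1) j
    omega
  · obtain hk | rfl | hk := lt_trichotomy k i
    · omega
    · omega
    · have := lam.rowLen_anti (i + 1) k hk
      omega

theorem filter_le_eq_vertical_iff {i j : ℕ} :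
    lam.cells.filter ((i, j) ≤ ·) = {(i, j), (i + 1, j)} ↔
      lam.rowLen i = j + 1 ∧ lam.rowLen (i + 1) = j + 1 ∧ lam.rowLen (i + 2) ≤ j := by
  simp only [filter_le_eq_iff_forall_rowLen, mem_insert, mem_singleton, Prod.mk.injEq]
  refine ⟨fun h => ?_, fun h k x => ?_⟩
  · have := h i j
    have := h i (j + 1)
    have := h (i + 1) j
    have := h (i + 1) (j + 1)
    have := h (i + 2) j
    omega
  · obtain hk | rfl | rfl | hk : k < i ∨ k = i ∨ k = i + 1 ∨ i + 2 ≤ k := by omega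
    · omega
    · omega
    · omega
    · have := lam.rowLen_anti (i + 2) k hk
      omega

theorem addBox_iff_exists_row :
    AddBox μ lam ↔ ∃ i, lam.rowLen (i + 1) < lam.rowLen i ∧
      μ = removeAbove lam (i, lam.rowLen i - 1) := by
  have isLeast_self (i j : ℕ) : IsLeast (({(i, j)} : Finset (ℕ × ℕ)) : Set (ℕ × ℕ)) (i, j) := by
    simp
  simp only [addBox_iff_exists_cells_sdiff, Prod.exists,
    le_and_sdiff_cells_eq_iff (isLeast_self _ _), filter_le_eq_singleton_iff]
  constructor
  · rintro ⟨i, j, ⟨hi, hi1⟩, rfl⟩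
    exact ⟨i, by omega, by rw [hi, Nat.add_sub_cancel]⟩
  · rintro ⟨i, hi, rfl⟩
    exact ⟨i, lam.rowLen i - 1, by omega, rfl⟩

theorem addDominoH_iff_exists_row :
    AddDominoH μ lam ↔ ∃ i, lam.rowLen (i + 1) + 2 ≤ lam.rowLen i ∧
      μ = removeAbove lam (i, lam.rowLen i - 2) := by
  have isLeast_pair (i j : ℕ) :
      IsLeast (({(i, j), (i, j + 1)} : Finset (ℕ × ℕ)) : Set (ℕ × ℕ)) (i, j) := by
    simp [IsLeast, lowerBounds]
  simp only [AddDominoH, ← exists_and_left, le_and_sdiff_cells_eq_iff (isLeast_pair _ _),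
    filter_le_eq_horizontal_iff]
  constructor
  · rintro ⟨i, j, ⟨hi, hi1⟩, rfl⟩
    exact ⟨i, by omega, by rw [hi, Nat.add_sub_cancel]⟩
  · rintro ⟨i, hi, rfl⟩
    exact ⟨i, lam.rowLen i - 2, by omega, rfl⟩

theorem addDominoV_iff_exists_row :
    AddDominoV μ lam ↔ ∃ i, (lam.rowLen (i + 1) = lam.rowLen i ∧
      lam.rowLen (i + 2) < lam.rowLen (i + 1)) ∧ μ = removeAbove lam (i, lam.rowLen i - 1) := by
  have isLeast_pair (i j : ℕ) :
      IsLeast (({(i, j), (i + 1, j)} : Finset (ℕ × ℕ)) : Set (ℕ × ℕ)) (i, j) := by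
    simp [IsLeast, lowerBounds]
  simp only [AddDominoV, ← exists_and_left, le_and_sdiff_cells_eq_iff (isLeast_pair _ _),
    filter_le_eq_vertical_iff]
  constructor
  · rintro ⟨i, j, ⟨hi, hi1, hi2⟩, rfl⟩
    exact ⟨i, by omega, by rw [hi, Nat.add_sub_cancel]⟩
  · rintro ⟨i, hi, rfl⟩
    exact ⟨i, lam.rowLen i - 1, by omega, rfl⟩

theorem card_eq_add_two_of_addDominoH (h : AddDominoH μ lam) : lam.card = μ.card + 2 := by
  obtain ⟨hle, i, j, hij⟩ := h
  have := card_sdiff_add_card_eq_card (YoungDiagram.cells_subset_iff.2 hle)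
  rw [hij, card_pair (by simp)] at this
  exact this.symm.trans (add_comm _ _)

theorem card_eq_add_two_of_addDominoV (h : AddDominoV μ lam) : lam.card = μ.card + 2 := by
  obtain ⟨hle, i, j, hij⟩ := h
  have := card_sdiff_add_card_eq_card (YoungDiagram.cells_subset_iff.2 hle)
  rw [hij, card_pair (by simp)] at this
  exact this.symm.trans (add_comm _ _)

section FinsumRows

variable {M : Type*} [AddCommMonoid M] (lam : YoungDiagram) (f : YoungDiagram → M)

theorem finsum_mem_image_removeAbove {p : ℕ → Prop} [DecidablePred p] {col : ℕ → ℕ}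
    (hp : ∀ i, p i → (i, col i) ∈ lam) :
    ∑ᶠ μ ∈ {μ | ∃ i, p i ∧ μ = removeAbove lam (i, col i)}, f μ =
      ∑ i ∈ range (nrows lam), if p i then f (removeAbove lam (i, col i)) else 0 := by
  have p_iff_mem : ∀ i, p i ↔ i ∈ (range (nrows lam)).filter p := fun i => by
    rw [mem_filter, mem_range, lt_nrows_iff]
    exact ⟨fun hi => ⟨Nat.zero_lt_of_lt (YoungDiagram.mem_iff_lt_rowLen.1 (hp i hi)), hi⟩,
      And.right⟩
  have set_eq : {μ | ∃ i, p i ∧ μ = removeAbove lam (i, col i)} =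
      (fun i => removeAbove lam (i, col i)) '' ((range (nrows lam)).filter p : Finset ℕ) := by
    ext μ
    simp only [Set.mem_ofPred_eq, Set.mem_image, mem_coe, ← p_iff_mem, eq_comm]
  have injOn : Set.InjOn (fun i => removeAbove lam (i, col i))
      ((range (nrows lam)).filter p : Finset ℕ) := fun i hi k hk hik =>
    congrArg Prod.fst (injOn_removeAbove lam (hp i ((p_iff_mem i).2 hi))
      (hp k ((p_iff_mem k).2 hk)) hik)
  rw [set_eq, finsum_mem_image injOn, finsum_mem_coe_finset, sum_filter]

theorem finsum_addBox : ∑ᶠ μ ∈ {μ | AddBox μ lam}, f μ =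
    ∑ i ∈ range (nrows lam), if lam.rowLen (i + 1) < lam.rowLen i
      then f (removeAbove lam (i, lam.rowLen i - 1)) else 0 := by
  simp only [addBox_iff_exists_row]
  exact finsum_mem_image_removeAbove lam f fun i hi =>
    YoungDiagram.mem_iff_lt_rowLen.2 (by omega)

theorem finsum_addDominoH : ∑ᶠ μ ∈ {μ | AddDominoH μ lam}, f μ =
    ∑ i ∈ range (nrows lam), if lam.rowLen (i + 1) + 2 ≤ lam.rowLen i
      then f (removeAbove lam (i, lam.rowLen i - 2)) else 0 := by
  simp only [addDominoH_iff_exists_row]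
  exact finsum_mem_image_removeAbove lam f fun i hi =>
    YoungDiagram.mem_iff_lt_rowLen.2 (by omega)

theorem finsum_addDominoV : ∑ᶠ μ ∈ {μ | AddDominoV μ lam}, f μ =
    ∑ i ∈ range (nrows lam),
      if lam.rowLen (i + 1) = lam.rowLen i ∧ lam.rowLen (i + 2) < lam.rowLen (i + 1)
      then f (removeAbove lam (i, lam.rowLen i - 1)) else 0 := by
  simp only [addDominoV_iff_exists_row]
  exact finsum_mem_image_removeAbove lam f fun i hi =>
    YoungDiagram.mem_iff_lt_rowLen.2 (by omega)

end FinsumRows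

end YoungDiagram

section StandardTableaux

variable (lam : YoungDiagram)

theorem SYTCount_eq_card_monotoneNumbering :
    SYTCount lam = Nat.card (MonotoneNumbering lam.cells lam.card) :=
  Nat.card_congr <| Equiv.subtypeEquivRight fun _ =>
    ⟨fun hT a b hab => hT a b hab.1 hab.2, fun hT _ _ h₁ h₂ => hT ⟨h₁, h₂⟩⟩

theorem SYTCount_bot : SYTCount ⊥ = 1 := by
  rw [SYTCount_eq_card_monotoneNumbering, YoungDiagram.cells_bot, card_eq_zero_iff_eq_bot.2 rfl,
    card_monotoneNumbering_empty]

theorem SYTCount_eq_finsum {lam : YoungDiagram} (hlam : lam ≠ ⊥) :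
    SYTCount lam = ∑ᶠ μ ∈ {μ | AddBox μ lam}, SYTCount μ := by
  classical
  obtain ⟨n, hn⟩ := Nat.exists_eq_succ_of_ne_zero (mt card_eq_zero_iff_eq_bot.1 hlam)
  have set_eq : {μ | AddBox μ lam} =
      removeAbove lam '' (lam.cells.filter (Maximal (· ∈ lam.cells)) : Finset (ℕ × ℕ)) := by
    ext μ
    simp only [Set.mem_ofPred_eq, addBox_iff_exists_maximal, Set.mem_image, mem_coe, mem_filter,
      eq_comm (a := μ)]
    exact exists_congr fun c => and_congr_left' ⟨fun h => ⟨h.prop, h⟩, And.right⟩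
  have count_removeAbove {c : ℕ × ℕ} (hc : Maximal (· ∈ lam.cells) c) :
      SYTCount (removeAbove lam c) = Nat.card (MonotoneNumbering (lam.cells.erase c) n) := by
    have hcells : (removeAbove lam c).cells = lam.cells.erase c := by
      rw [cells_removeAbove, filter_le_eq_singleton_iff_maximal.2 hc, sdiff_singleton_eq_erase]
    have hcard : (removeAbove lam c).card = n := by
      rw [YoungDiagram.card, hcells, card_erase_of_mem hc.prop, ← YoungDiagram.card, hn,
        Nat.succ_sub_one]
    rw [SYTCount_eq_card_monotoneNumbering, hcells, hcard]
  rw [set_eq, finsum_mem_image ((injOn_removeAbove lam).mono (coe_subset.2 (filter_subset _ _))),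
    finsum_mem_coe_finset, SYTCount_eq_card_monotoneNumbering, hn, card_monotoneNumbering_succ]
  exact sum_congr rfl fun c hc => (count_removeAbove (mem_filter.1 hc).2).symm

end StandardTableaux

section ShiftDeterminants

variable {R : Type*}

/-- The matrix whose `j`-th column is the window of length `N` of the sequence `h` starting at
`m j`. Jacobi–Trudi matrices and, up to scaling of columns, Wronskians of Appell sequences have
this form. -/
def shiftMatrix (h : ℤ → R) (N : ℕ) (m : ℕ → ℤ) : Matrix (Fin N) (Fin N) R :=
  Matrix.of fun i j => h (m j + i)

theorem shiftMatrix_update {N : ℕ} (h : ℤ → R) (m : ℕ → ℤ) (j : Fin N) (z : ℤ) :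
    shiftMatrix h N (Function.update m j z) =
      (shiftMatrix h N m).updateCol j fun i => h (z + i) := by
  ext i k
  by_cases hk : k = j
  · simp [shiftMatrix, hk]
  · simp [shiftMatrix, hk, Function.update_of_ne (Fin.val_ne_of_ne hk)]

variable [CommRing R]

theorem sum_det_updateCol_add_mul {n : Type*} [Fintype n] [DecidableEq n] (A : Matrix n n R)
    (u v : n → R) :
    ∑ j, (A.updateCol j fun i => (u j + v i) * A i j).det = (∑ j, (u j + v j)) * A.det := by
  have cofactor_expansion (j : n) : (A.updateCol j fun i => (u j + v i) * A i j).det =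
      u j * ∑ i, A i j * A.adjugate j i + ∑ i, v i * (A i j * A.adjugate j i) := by
    rw [← Matrix.cramer_apply, Matrix.cramer_eq_adjugate_mulVec, Matrix.mulVec, dotProduct,
      mul_sum, ← sum_add_distrib]
    exact sum_congr rfl fun i _ => by ring
  simp_rw [cofactor_expansion, ← Matrix.det_eq_sum_mul_adjugate_col, sum_add_distrib, add_mul,
    sum_mul]
  rw [sum_comm (f := fun j i => v i * _)]
  simp_rw [← mul_sum, ← Matrix.det_eq_sum_mul_adjugate_row]

variable {h : ℤ → R} {N : ℕ} {m : ℕ → ℤ}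

theorem det_shiftMatrix_eq_zero_of_eq {j k : ℕ} (hj : j < N) (hk : k < N) (hjk : j ≠ k)
    (hm : m j = m k) : (shiftMatrix h N m).det = 0 :=
  Matrix.det_zero_of_column_eq (i := ⟨j, hj⟩) (j := ⟨k, hk⟩) (by simpa using hjk)
    fun i => by simp [shiftMatrix, hm]

theorem det_shiftMatrix_eq_zero_of_le_neg (hneg : ∀ k < 0, h k = 0) {j : ℕ} (hj : j < N)
    (hm : m j ≤ -N) : (shiftMatrix h N m).det = 0 :=
  Matrix.det_eq_zero_of_column_eq_zero ⟨j, hj⟩ fun i =>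
    hneg _ (show m j + i < 0 by have := i.2; omega)

theorem det_shiftMatrix_comp_swap (h : ℤ → R) (m : ℕ → ℤ) {j k : ℕ} (hj : j < N) (hk : k < N)
    (hjk : j ≠ k) :
    (shiftMatrix h N (m ∘ Equiv.swap j k)).det = -(shiftMatrix h N m).det := by
  have columns_swapped : shiftMatrix h N (m ∘ Equiv.swap j k) =
      (shiftMatrix h N m).submatrix id (Equiv.swap ⟨j, hj⟩ ⟨k, hk⟩) := by
    ext i x
    have swap_val : ((Equiv.swap (⟨j, hj⟩ : Fin N) ⟨k, hk⟩ x : Fin N) : ℕ) =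
        Equiv.swap j k x := by
      simp only [Equiv.swap_apply_def, Fin.ext_iff]
      split_ifs <;> rfl
    simp only [shiftMatrix, Matrix.of_apply, Matrix.submatrix_apply, id, Function.comp, swap_val]
  rw [columns_swapped, Matrix.det_permute', Equiv.Perm.sign_swap (by simpa using hjk)]
  simp

theorem det_shiftMatrix_succ (h0 : h 0 = 1) (hneg : ∀ k < 0, h k = 0) (hm : m N = -N) :
    (shiftMatrix h (N + 1) m).det = (shiftMatrix h N m).det := by
  have last_column (i : Fin N) : shiftMatrix h (N + 1) m i.castSucc (Fin.last N) = 0 :=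
    hneg _ (by simp [hm])
  have corner : shiftMatrix h (N + 1) m (Fin.last N) (Fin.last N) = 1 := by
    simp [shiftMatrix, hm, h0]
  have minor : (shiftMatrix h (N + 1) m).submatrix (Fin.last N).succAbove (Fin.last N).succAbove =
      shiftMatrix h N m := by
    ext i k
    simp [shiftMatrix, Fin.succAbove_last]
  rw [Matrix.det_succ_column _ (Fin.last N), Fin.sum_univ_castSucc, sum_eq_zero fun i _ => by
    rw [last_column, mul_zero, zero_mul], corner, minor, Fin.val_last,
    Even.neg_one_pow (Even.add_self N), zero_add, one_mul, one_mul]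

/-- `h k` obeys the laws of the coefficient of `t ^ k` in `exp (a t + b t² / 2)`; the third field
compares coefficients in `t ∂ₜ exp (a t + b t² / 2) = (a t + b t²) exp (a t + b t² / 2)`. -/
structure IsExpQuadraticCoeff (a b : R) (h : ℤ → R) : Prop where
  zero : h 0 = 1
  neg : ∀ k < 0, h k = 0
  mul_eq : ∀ k : ℤ, (k : R) * h k = a * h (k - 1) + b * h (k - 2)

theorem IsExpQuadraticCoeff.sum_mul_det_shiftMatrix {a b : R} (hh : IsExpQuadraticCoeff a b h)
    (N : ℕ) (m : ℕ → ℤ) :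
    ((∑ j ∈ range N, (m j + j) : ℤ) : R) * (shiftMatrix h N m).det =
      ∑ j ∈ range N, (a * (shiftMatrix h N (Function.update m j (m j - 1))).det
        + b * (shiftMatrix h N (Function.update m j (m j - 2))).det) := by
  have weighted_det := sum_det_updateCol_add_mul (shiftMatrix h N m)
    (fun j => ((m j : ℤ) : R)) (fun i => ((i : ℕ) : R))
  rw [sum_range, sum_range]
  push_cast
  rw [← weighted_det]
  refine sum_congr rfl fun j _ => ?_
  rw [shiftMatrix_update, shiftMatrix_update, ← Matrix.det_updateCol_smul,
    ← Matrix.det_updateCol_smul, ← Matrix.det_updateCol_add]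
  congr 2
  funext i
  have recursion := hh.mul_eq (m j + i)
  push_cast at recursion
  rw [shiftMatrix, Matrix.of_apply, recursion, Pi.add_apply, Pi.smul_apply, Pi.smul_apply,
    smul_eq_mul, smul_eq_mul, sub_add_eq_add_sub, sub_add_eq_add_sub]

end ShiftDeterminants

section JacobiTrudi

/-- The shifted parts `λ_j - j` of a partition (a set of beta numbers, or Maya diagram). -/
def betaSeq (lam : YoungDiagram) (j : ℕ) : ℤ := lam.rowLen j - j

theorem betaSeq_removeAbove {lam : YoungDiagram} {i j : ℕ} (hi : lam.rowLen (i + 1) ≤ j)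
    (hj : j ≤ lam.rowLen i) :
    betaSeq (removeAbove lam (i, j)) = Function.update (betaSeq lam) i (j - i) := by
  funext k
  rw [betaSeq, rowLen_removeAbove, Function.update_apply, betaSeq]
  obtain hk | rfl | hk := lt_trichotomy k i
  · rw [if_neg (by omega), if_neg (by omega)]
  · rw [if_pos le_rfl, if_pos rfl, min_eq_right hj]
  · rw [if_pos hk.le, if_neg (by omega), min_eq_left ((lam.rowLen_anti _ _ hk).trans hi)]

theorem betaSeq_removeAbove_comp_swap {lam : YoungDiagram} {i : ℕ}
    (hi : lam.rowLen (i + 1) = lam.rowLen i) (hi' : lam.rowLen (i + 2) < lam.rowLen (i + 1)) :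
    betaSeq (removeAbove lam (i, lam.rowLen i - 1)) ∘ Equiv.swap i (i + 1) =
      Function.update (betaSeq lam) i (betaSeq lam i - 2) := by
  funext k
  rw [Function.comp_apply, betaSeq, rowLen_removeAbove]
  obtain hk | rfl | rfl | hk : k < i ∨ k = i ∨ k = i + 1 ∨ i + 2 ≤ k := by omega
  · rw [Equiv.swap_apply_of_ne_of_ne (by omega) (by omega), if_neg (by omega),
      Function.update_of_ne (by omega), betaSeq]
  · rw [Equiv.swap_apply_left, if_pos (by omega), Function.update_self, betaSeq]
    omega
  · rw [Equiv.swap_apply_right, if_pos le_rfl, Function.update_of_ne (by omega), betaSeq]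
    omega
  · have := lam.rowLen_anti (i + 2) k hk
    rw [Equiv.swap_apply_of_ne_of_ne (by omega) (by omega), if_pos (by omega),
      Function.update_of_ne (by omega), betaSeq]
    omega

variable {R : Type*} [CommRing R] {h : ℤ → R}

/-- The Jacobi–Trudi determinant `det (h_{λ_j - j + i})`, i.e. the Schur function `s_λ`
specialised at `h`. -/
def jacobiTrudi (h : ℤ → R) (lam : YoungDiagram) : R :=
  (shiftMatrix h (nrows lam) (betaSeq lam)).det

theorem jacobiTrudi_bot (h : ℤ → R) : jacobiTrudi h ⊥ = 1 := by
  rw [jacobiTrudi, nrows_bot, Matrix.det_fin_zero]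

theorem det_shiftMatrix_betaSeq (h0 : h 0 = 1) (hneg : ∀ k < 0, h k = 0) {lam : YoungDiagram}
    {N : ℕ} (hN : nrows lam ≤ N) : (shiftMatrix h N (betaSeq lam)).det = jacobiTrudi h lam := by
  induction N, hN using Nat.le_induction with
  | base => rfl
  | succ N hN ih =>
    have rowLen_eq_zero : lam.rowLen N = 0 :=
      Nat.eq_zero_of_not_pos fun hpos => (lt_nrows_iff.2 hpos).not_ge hN
    rw [det_shiftMatrix_succ h0 hneg (by simp [betaSeq, rowLen_eq_zero]), ih]

theorem det_shiftMatrix_betaSeq_removeAbove (h0 : h 0 = 1) (hneg : ∀ k < 0, h k = 0)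
    (lam : YoungDiagram) (c : ℕ × ℕ) :
    (shiftMatrix h (nrows lam) (betaSeq (removeAbove lam c))).det =
      jacobiTrudi h (removeAbove lam c) :=
  det_shiftMatrix_betaSeq h0 hneg (nrows_le_nrows_of_le (removeAbove_le lam c))

variable {lam : YoungDiagram} {i : ℕ}

theorem det_shiftMatrix_update_sub_one (h0 : h 0 = 1) (hneg : ∀ k < 0, h k = 0)
    (hi : i < nrows lam) :
    (shiftMatrix h (nrows lam) (Function.update (betaSeq lam) i (betaSeq lam i - 1))).det =
      if lam.rowLen (i + 1) < lam.rowLen i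
        then jacobiTrudi h (removeAbove lam (i, lam.rowLen i - 1)) else 0 := by
  have rowLen_pos := lt_nrows_iff.1 hi
  split_ifs with hbox
  · rw [← det_shiftMatrix_betaSeq_removeAbove h0 hneg,
      betaSeq_removeAbove (by omega) (by omega), betaSeq]
    congr 3
    omega
  · have rowLen_eq := le_antisymm (lam.rowLen_anti i (i + 1) (by omega)) (not_lt.1 hbox)
    have hi1 : i + 1 < nrows lam := lt_nrows_iff.2 (by omega)
    refine det_shiftMatrix_eq_zero_of_eq hi hi1 (by omega) ?_
    rw [Function.update_self, Function.update_of_ne (by omega), betaSeq, betaSeq, rowLen_eq]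
    push_cast
    ring

theorem det_shiftMatrix_update_sub_two (h0 : h 0 = 1) (hneg : ∀ k < 0, h k = 0)
    (hi : i < nrows lam) :
    (shiftMatrix h (nrows lam) (Function.update (betaSeq lam) i (betaSeq lam i - 2))).det =
      (if lam.rowLen (i + 1) + 2 ≤ lam.rowLen i
        then jacobiTrudi h (removeAbove lam (i, lam.rowLen i - 2)) else 0) -
      if lam.rowLen (i + 1) = lam.rowLen i ∧ lam.rowLen (i + 2) < lam.rowLen (i + 1)
        then jacobiTrudi h (removeAbove lam (i, lam.rowLen i - 1)) else 0 := by
  have rowLen_pos := lt_nrows_iff.1 hi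
  have rowLen_anti := lam.rowLen_anti i (i + 1) (by omega)
  have rowLen_anti' := lam.rowLen_anti (i + 1) (i + 2) (by omega)
  obtain hH | hrow | hrow :
      lam.rowLen (i + 1) + 2 ≤ lam.rowLen i ∨ lam.rowLen i = lam.rowLen (i + 1) + 1 ∨
        lam.rowLen (i + 1) = lam.rowLen i := by omega
  · rw [if_pos hH, if_neg (by omega), sub_zero, ← det_shiftMatrix_betaSeq_removeAbove h0 hneg,
      betaSeq_removeAbove (by omega) (by omega), betaSeq]
    congr 3
    omega
  · rw [if_neg (by omega), if_neg (by omega), sub_zero]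
    by_cases hi1 : i + 1 < nrows lam
    · refine det_shiftMatrix_eq_zero_of_eq hi hi1 (by omega) ?_
      rw [Function.update_self, Function.update_of_ne (by omega), betaSeq, betaSeq, hrow]
      push_cast
      ring
    · have := lt_nrows_iff.not.1 hi1
      refine det_shiftMatrix_eq_zero_of_le_neg hneg hi ?_
      simp only [Function.update_self, betaSeq]
      omega
  · have hi1 : i + 1 < nrows lam := lt_nrows_iff.2 (by omega)
    rw [if_neg (by omega), zero_sub]
    split_ifs with hV
    · rw [← betaSeq_removeAbove_comp_swap hV.1 hV.2,
        det_shiftMatrix_comp_swap _ _ hi hi1 (by omega),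
        det_shiftMatrix_betaSeq_removeAbove h0 hneg]
    · have hi2 : i + 2 < nrows lam := lt_nrows_iff.2 (by omega)
      rw [neg_zero]
      refine det_shiftMatrix_eq_zero_of_eq hi hi2 (by omega) ?_
      rw [Function.update_self, Function.update_of_ne (by omega), betaSeq, betaSeq,
        show lam.rowLen (i + 2) = lam.rowLen i by omega]
      push_cast
      ring

theorem IsExpQuadraticCoeff.card_mul_jacobiTrudi {a b : R} (hh : IsExpQuadraticCoeff a b h)
    (lam : YoungDiagram) :
    (lam.card : R) * jacobiTrudi h lam =
      a * ∑ᶠ μ ∈ {μ | AddBox μ lam}, jacobiTrudi h μ +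
        b * (∑ᶠ ρ ∈ {ρ | AddDominoH ρ lam}, jacobiTrudi h ρ -
          ∑ᶠ ρ ∈ {ρ | AddDominoV ρ lam}, jacobiTrudi h ρ) := by
  have sum_betaSeq : ∑ j ∈ range (nrows lam), (betaSeq lam j + j) = (lam.card : ℤ) := by
    simp [betaSeq, card_eq_sum_rowLen]
  have euler := hh.sum_mul_det_shiftMatrix (nrows lam) (betaSeq lam)
  rw [sum_betaSeq, Int.cast_natCast] at euler
  rw [jacobiTrudi, euler, finsum_addBox, finsum_addDominoH, finsum_addDominoV, ← sum_sub_distrib,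
    mul_sum, mul_sum, ← sum_add_distrib]
  refine sum_congr rfl fun i hi => ?_
  rw [det_shiftMatrix_update_sub_one hh.zero hh.neg (mem_range.1 hi),
    det_shiftMatrix_update_sub_two hh.zero hh.neg (mem_range.1 hi)]

end JacobiTrudi

section GradedRecursion

theorem finite_setOf_diagram_le (lam : YoungDiagram) : {μ | μ ≤ lam}.Finite :=
  Set.Finite.of_injOn (f := YoungDiagram.cells) (t := lam.cells.powerset)
    (fun _ hμ => mem_powerset.2 (YoungDiagram.cells_subset_iff.2 hμ))
    (fun _ _ _ _ => YoungDiagram.ext) (finite_toSet _)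

theorem mul_finsum_mem_mul {α R : Type*} [CommRing R] {S : Set α} (hS : S.Finite) {c d : R}
    {w : α → R} (hw : ∀ x ∈ S, c * w x = d) (f : α → R) :
    c * ∑ᶠ x ∈ S, w x * f x = d * ∑ᶠ x ∈ S, f x := by
  rw [mul_finsum_mem' _ _ hS, mul_finsum_mem' _ _ hS]
  exact finsum_mem_congr rfl fun x hx => by rw [← mul_assoc, hw x hx]

theorem IsExpQuadraticCoeff.factorial_card_mul_jacobiTrudi {R : Type*} [CommRing R] {a b : R}
    {h : ℤ → R} (hh : IsExpQuadraticCoeff a b h) {lam : YoungDiagram} (hlam : lam ≠ ⊥) :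
    (lam.card.factorial : R) * jacobiTrudi h lam =
      a * (∑ᶠ μ ∈ {μ | AddBox μ lam}, (μ.card.factorial : R) * jacobiTrudi h μ) +
        b * (((lam.card : R) - 1) *
          ((∑ᶠ ρ ∈ {ρ | AddDominoH ρ lam}, (ρ.card.factorial : R) * jacobiTrudi h ρ) -
            ∑ᶠ ρ ∈ {ρ | AddDominoV ρ lam}, (ρ.card.factorial : R) * jacobiTrudi h ρ)) := by
  have finite_of_le {S : Set YoungDiagram} (hS : ∀ μ ∈ S, μ ≤ lam) : S.Finite :=
    (finite_setOf_diagram_le lam).subset hS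
  have domino_factor {ρ : YoungDiagram} (hρ : lam.card = ρ.card + 2) :
      ((lam.card : R) - 1) * ρ.card.factorial = ((lam.card - 1).factorial : R) := by
    rw [hρ, show ρ.card + 2 - 1 = ρ.card + 1 by omega, Nat.factorial_succ]
    push_cast
    ring
  have box_terms := mul_finsum_mem_mul (finite_of_le (S := {μ | AddBox μ lam}) fun μ hμ => hμ.1)
    (c := 1) (w := fun μ => (μ.card.factorial : R)) (d := ((lam.card - 1).factorial : R))
    (fun μ hμ => by rw [one_mul, hμ.2, Nat.add_sub_cancel]) (jacobiTrudi h)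
  have dominoH_terms := mul_finsum_mem_mul
    (finite_of_le (S := {ρ | AddDominoH ρ lam}) fun ρ hρ => hρ.1)
    (fun ρ hρ => domino_factor (card_eq_add_two_of_addDominoH hρ)) (jacobiTrudi h)
  have dominoV_terms := mul_finsum_mem_mul
    (finite_of_le (S := {ρ | AddDominoV ρ lam}) fun ρ hρ => hρ.1)
    (fun ρ hρ => domino_factor (card_eq_add_two_of_addDominoV hρ)) (jacobiTrudi h)
  rw [one_mul] at box_terms
  rw [mul_sub, box_terms, dominoH_terms, dominoV_terms,
    ← Nat.mul_factorial_pred (mt card_eq_zero_iff_eq_bot.1 hlam), Nat.cast_mul, mul_right_comm,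
    hh.card_mul_jacobiTrudi]
  ring

end GradedRecursion

section DividedSequences

variable {R : Type*} [CommRing R] [Algebra ℚ R] {H : ℕ → R}

/-- The sequence `H k / k!`, extended by zero to negative `k`. -/
def dividedSeq (H : ℕ → R) : ℤ → R
  | Int.ofNat n => (n.factorial : ℚ)⁻¹ • H n
  | Int.negSucc _ => 0

theorem dividedSeq_natCast (H : ℕ → R) (n : ℕ) :
    dividedSeq H n = (n.factorial : ℚ)⁻¹ • H n :=
  rfl

theorem dividedSeq_of_neg (H : ℕ → R) : ∀ k < 0, dividedSeq H k = 0
  | Int.negSucc _, _ => rfl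

theorem cast_succ_mul_inv_factorial_smul (n : ℕ) (x : R) :
    ((n + 1 : ℕ) : R) * (((n + 1).factorial : ℚ)⁻¹ • x) = (n.factorial : ℚ)⁻¹ • x := by
  have hn : ((n + 1 : ℕ) : ℚ) ≠ 0 := Nat.cast_ne_zero.2 n.succ_ne_zero
  rw [← nsmul_eq_mul, ← Nat.cast_smul_eq_nsmul ℚ, smul_smul, Nat.factorial_succ, Nat.cast_mul,
    mul_inv, mul_inv_cancel_left₀ hn]

theorem cast_succ_mul_dividedSeq (H : ℕ → R) (n : ℕ) :
    ((n + 1 : ℕ) : R) * dividedSeq H (n + 1 : ℕ) = (n.factorial : ℚ)⁻¹ • H (n + 1) :=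
  cast_succ_mul_inv_factorial_smul n (H (n + 1))

theorem dividedSeq_zero (h0 : H 0 = 1) : dividedSeq H 0 = 1 := by
  simpa [h0] using dividedSeq_natCast H 0

theorem isExpQuadraticCoeff_dividedSeq {a b : R} (h0 : H 0 = 1) (h1 : H 1 = a)
    (hrec : ∀ n : ℕ, H (n + 2) = a * H (n + 1) + b * ((n + 1 : ℕ) * H n)) :
    IsExpQuadraticCoeff a b (dividedSeq H) where
  zero := dividedSeq_zero h0
  neg := dividedSeq_of_neg H
  mul_eq
    | Int.negSucc n => by
      rw [dividedSeq_of_neg H _ (by omega), dividedSeq_of_neg H _ (by omega),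
        dividedSeq_of_neg H _ (by omega), mul_zero, mul_zero, mul_zero, add_zero]
    | Int.ofNat 0 => by
      rw [dividedSeq_of_neg H (_ - 1) (by decide), dividedSeq_of_neg H (_ - 2) (by decide)]
      simp
    | Int.ofNat 1 => by
      rw [dividedSeq_of_neg H (_ - 2) (by decide), mul_zero, add_zero]
      simpa [h1, dividedSeq_zero h0] using cast_succ_mul_dividedSeq H 0
    | Int.ofNat (n + 2) => by
      have shift_one : Int.ofNat (n + 2) - 1 = (n + 1 : ℕ) := by simp; omega
      have shift_two : Int.ofNat (n + 2) - 2 = (n : ℕ) := by simp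
      have lower_term : ((n + 1).factorial : ℚ)⁻¹ • (((n + 1 : ℕ) : R) * H n) =
          dividedSeq H n := by
        rw [← mul_smul_comm, cast_succ_mul_inv_factorial_smul, dividedSeq_natCast]
      rw [shift_one, shift_two, Int.ofNat_eq_natCast, Int.cast_natCast, cast_succ_mul_dividedSeq,
        hrec, smul_add, ← mul_smul_comm, ← mul_smul_comm, lower_term, dividedSeq_natCast H (n + 1)]

theorem factorial_mul_dividedSeq (H : ℕ → R) (n i : ℕ) :
    (n.factorial : R) * dividedSeq H (n - i) = n.descFactorial i * H (n - i) := by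
  obtain hi | hi := lt_or_ge n i
  · rw [dividedSeq_of_neg H _ (by omega), Nat.descFactorial_of_lt hi, Nat.cast_zero, mul_zero,
      zero_mul]
  · have hne : ((n - i).factorial : ℚ) ≠ 0 := Nat.cast_ne_zero.2 (n - i).factorial_ne_zero
    rw [← Nat.cast_sub hi, dividedSeq_natCast, ← Nat.factorial_mul_descFactorial hi, Nat.cast_mul,
      mul_comm (Nat.cast _), mul_assoc, ← nsmul_eq_mul (n - i).factorial,
      ← Nat.cast_smul_eq_nsmul ℚ, smul_smul, mul_inv_cancel₀ hne, one_smul]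

/-- The factor relating the determinant of `n_j (n_j - 1) ⋯ (n_j - i + 1) H (n_j - i)` for the
degree vector `n` to a Jacobi–Trudi determinant: `∏ n_j!`, times the sign of the reversal of rows
caused by `n_j - i` decreasing in `i`. -/
def degVecFactor (μ : YoungDiagram) : ℤ :=
  (Equiv.Perm.sign (Fin.revPerm : Equiv.Perm (Fin (nrows μ))) : ℤ) * ∏ j, (degVec μ j).factorial

theorem det_descFactorial_mul (H : ℕ → R) (μ : YoungDiagram) :
    (Matrix.of fun i j : Fin (nrows μ) =>
      ((degVec μ j).descFactorial i : R) * H (degVec μ j - i)).det =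
        degVecFactor μ * jacobiTrudi (dividedSeq H) μ := by
  have reversed_rows : (Matrix.of fun i j : Fin (nrows μ) => dividedSeq H (degVec μ j - i)) =
      (shiftMatrix (dividedSeq H) (nrows μ) (betaSeq μ)).submatrix Fin.revPerm id := by
    ext i j
    simp only [shiftMatrix, betaSeq, degVec, Matrix.of_apply, Matrix.submatrix_apply, id,
      Fin.revPerm_apply, Fin.val_rev]
    congr 1
    omega
  simp_rw [← factorial_mul_dividedSeq]
  have scaled_columns := Matrix.det_mul_row (fun j => ((degVec μ j).factorial : R))
    (Matrix.of fun i j : Fin (nrows μ) => dividedSeq H (degVec μ j - i))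
  simp only [Matrix.of_apply] at scaled_columns
  rw [scaled_columns, reversed_rows, Matrix.det_permute, degVecFactor, jacobiTrudi]
  push_cast
  ring

end DividedSequences

section Hermite

theorem derivative_He_succ (n : ℕ) : derivative (He (n + 1)) = ((n + 1 : ℕ) : ℝ[X]) * He n := by
  induction n using Nat.twoStepInduction with
  | zero => simp [He]
  | one =>
    simp only [He, mul_one, derivative_sub, derivative_mul, derivative_X, derivative_C]
    push_cast
    ring
  | more n ih₀ ih₁ =>
    rw [He, derivative_sub, derivative_mul, derivative_mul, derivative_X, derivative_C, ih₀, ih₁,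
      He]
    simp only [map_add, map_natCast, map_one]
    push_cast
    ring

theorem iterate_derivative_He (n i : ℕ) :
    derivative^[i] (He n) = (n.descFactorial i : ℝ[X]) * He (n - i) := by
  induction i with
  | zero => simp
  | succ i ih =>
    rw [Function.iterate_succ_apply', ih, derivative_mul, derivative_natCast, zero_mul, zero_add,
      Nat.descFactorial_succ]
    rcases hk : n - i with _ | k
    · simp [He]
    · rw [derivative_He_succ, show n - (i + 1) = k by omega]
      push_cast
      ring

theorem isExpQuadraticCoeff_dividedSeq_He : IsExpQuadraticCoeff X (-1) (dividedSeq He) :=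
  isExpQuadraticCoeff_dividedSeq rfl rfl fun n => by
    rw [He]
    simp only [map_add, map_natCast, map_one]
    push_cast
    ring

theorem Wr_He_degVec (μ : YoungDiagram) :
    Wr (fun i => He (degVec μ i)) = degVecFactor μ * jacobiTrudi (dividedSeq He) μ := by
  simp_rw [Wr, iterate_derivative_He]
  exact det_descFactorial_mul He μ

end Hermite

section TableauCount

variable (R : Type*) [CommRing R] [Algebra ℚ R]

theorem isExpQuadraticCoeff_dividedSeq_one : IsExpQuadraticCoeff 1 0 (dividedSeq (1 : ℕ → R)) :=
  isExpQuadraticCoeff_dividedSeq rfl rfl fun n => by simp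

theorem SYTCount_eq_factorial_mul_jacobiTrudi (lam : YoungDiagram) :
    (SYTCount lam : R) = lam.card.factorial * jacobiTrudi (dividedSeq 1) lam := by
  induction hn : lam.card using Nat.strong_induction_on generalizing lam with
  | _ n ih =>
    obtain rfl | hlam := eq_or_ne lam ⊥
    · rw [SYTCount_bot, jacobiTrudi_bot, ← hn, card_eq_zero_iff_eq_bot.2 rfl]
      simp
    · rw [← hn, (isExpQuadraticCoeff_dividedSeq_one R).factorial_card_mul_jacobiTrudi hlam, one_mul,
        zero_mul, add_zero, SYTCount_eq_finsum hlam, ← Nat.coe_castAddMonoidHom,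
        AddMonoidHom.map_finsum_mem _ _ ((finite_setOf_diagram_le lam).subset fun μ hμ => hμ.1)]
      exact finsum_mem_congr rfl fun μ hμ =>
        ih μ.card (by have := hμ.2; omega) μ rfl

end TableauCount

section Normalization

theorem degVec_strictAnti (μ : YoungDiagram) : StrictAnti (degVec μ) := by
  intro i j hij
  have := μ.rowLen_anti i j hij.le
  have := Fin.lt_def.1 hij
  simp only [degVec]
  omega

theorem prod_sub_eq_det_vandermonde {R : Type*} [CommRing R] {n : ℕ} (v : Fin n → R) :
    ∏ p ∈ univ.filter (fun p : Fin n × Fin n => p.1 < p.2), (v p.2 - v p.1) =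
      (Matrix.vandermonde v).det := by
  rw [Matrix.det_vandermonde]
  exact prod_finset_product _ _ _ (by simp)

theorem det_vandermonde_degVec (μ : YoungDiagram) :
    (Matrix.vandermonde fun i => (degVec μ i : ℝ)).det =
      degVecFactor μ * jacobiTrudi (dividedSeq 1) μ := by
  rw [← det_descFactorial_mul, Matrix.det_eval_matrixOfPolynomials_eq_det_vandermonde _
    (fun i => descPochhammer ℝ i) (fun i => descPochhammer_natDegree ℝ i)
    (fun i => monic_descPochhammer ℝ i), ← Matrix.det_transpose]
  congr 1
  ext i j
  simp [descPochhammer_eval_eq_descFactorial]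

theorem C_jacobiTrudi_mul_HeW (μ : YoungDiagram) :
    C (jacobiTrudi (dividedSeq 1) μ) * HeW μ = jacobiTrudi (dividedSeq He) μ := by
  have vandermonde_ne_zero : (Matrix.vandermonde fun i => (degVec μ i : ℝ)).det ≠ 0 :=
    Matrix.det_vandermonde_ne_zero_iff.2
      (Nat.cast_injective.comp (degVec_strictAnti μ).injective)
  have factor_cast : (degVecFactor μ : ℝ[X]) = C (degVecFactor μ : ℝ) :=
    (map_intCast (C : ℝ →+* ℝ[X]) _).symm
  rw [HeW, prod_sub_eq_det_vandermonde fun i => (degVec μ i : ℝ), Wr_He_degVec, factor_cast,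
    ← mul_assoc, ← mul_assoc, ← C_mul, ← C_mul, mul_right_comm, mul_comm (jacobiTrudi _ _),
    ← det_vandermonde_degVec, mul_inv_cancel₀ vandermonde_ne_zero, C_1, one_mul]

theorem C_SYTCount_mul_HeW (μ : YoungDiagram) :
    C (SYTCount μ : ℝ) * HeW μ = (μ.card.factorial : ℝ[X]) * jacobiTrudi (dividedSeq He) μ := by
  rw [SYTCount_eq_factorial_mul_jacobiTrudi, C_mul, mul_assoc, C_jacobiTrudi_mul_HeW, map_natCast]

end Normalization

theorem stmt16 (lam : YoungDiagram) (h : lam ≠ ⊥) :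
    C (SYTCount lam : ℝ) * HeW lam
      = X * (∑ᶠ μ ∈ {μ : YoungDiagram | AddBox μ lam}, C (SYTCount μ : ℝ) * HeW μ)
        - C ((lam.card : ℝ) - 1) *
            ((∑ᶠ ρ ∈ {ρ : YoungDiagram | AddDominoH ρ lam}, C (SYTCount ρ : ℝ) * HeW ρ)
              - ∑ᶠ ρ ∈ {ρ : YoungDiagram | AddDominoV ρ lam}, C (SYTCount ρ : ℝ) * HeW ρ) := by
  simp_rw [C_SYTCount_mul_HeW]
  rw [isExpQuadraticCoeff_dividedSeq_He.factorial_card_mul_jacobiTrudi h, neg_one_mul,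
    ← sub_eq_add_neg, C_sub, C_1, map_natCast]
end

section
/- If λ = (n,…,n) is a rectangular partition with m rows, then L_λ^(α)(x) = l_{λ'}^(−α−n)(x) for all α, where λ' = (m,…,m) has n rows and L_λ^(α) is the monic Wronskian of the classical Laguerre polynomials L_{n_1}^(α),…,L_{n_m}^(α) with n_i = n+m−i. -/
open Polynomial

/-- Classical Laguerre polynomials with parameter `α`, defined by their 3-term recurrence. -/
noncomputable def Lag (α : ℝ) : ℕ → Polynomial ℝ
  | 0 => 1
  | 1 => C (α + 1) - X
  | (n + 2) =>
      (C 2 + C (1 / ((n : ℝ) + 2)) * (C (α - 1) - X)) * Lag α (n + 1)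
        - C (1 + (α - 1) / ((n : ℝ) + 2)) * Lag α n

/-- Modified Laguerre polynomials `l_n^(α)(x) := n! · L_n^(α-n)(-x)`. -/
noncomputable def lmod (α : ℝ) (n : ℕ) : Polynomial ℝ :=
  (Nat.factorial n : ℝ) • ((Lag (α - n) n).comp (-X))

/-
The series `F_β(u) = (1 + t) ^ β exp (u t)` satisfies `F_β(u) F_γ(v) = F_{β+γ}(u + v)`. The
coefficient of `t ^ k` is `L_k^(β - k)(x)` for `u = -x` and `l_k^(β)(x) / k!` for `u = x`.
In both cases, up to a constant factor, `d/dx` multiplies the series by `t`, so the Wronskian of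
consecutive coefficients is a minor of the Toeplitz matrix of the series. The Laguerre polynomials
with fixed parameter reduce to these coefficients because `F_{β+j} = (1 + t) ^ j F_β`. Since
`F_{α+n}(-x)` and `F_{-α-n}(x)` are inverse to each other, so are their Toeplitz matrices, and
Jacobi's complementary minor theorem identifies the two Wronskians up to a unit. Both sides of the
theorem are monic, so they agree.
-/

section Determinant

variable {R : Type*} [CommRing R]

theorem det_toBlocks₁₁_eq_det_mul_det_toBlocks₂₂ {m n : Type*} [Fintype m] [Fintype n]
    [DecidableEq m] [DecidableEq n] {M N : Matrix (m ⊕ n) (m ⊕ n) R} (h : M * N = 1) :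
    M.toBlocks₁₁.det = M.det * N.toBlocks₂₂.det := by
  have hblocks := h
  rw [← M.fromBlocks_toBlocks, ← N.fromBlocks_toBlocks, Matrix.fromBlocks_multiply,
    ← Matrix.fromBlocks_one, Matrix.fromBlocks_inj] at hblocks
  obtain ⟨-, h₁₂, -, h₂₂⟩ := hblocks
  have hmul : M * Matrix.fromBlocks 1 N.toBlocks₁₂ 0 N.toBlocks₂₂ =
      Matrix.fromBlocks M.toBlocks₁₁ 0 M.toBlocks₂₁ 1 := by
    conv_lhs => rw [← M.fromBlocks_toBlocks]
    simp only [Matrix.fromBlocks_multiply, Matrix.mul_one, Matrix.mul_zero, add_zero, h₁₂, h₂₂]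
  simpa using (congrArg Matrix.det hmul).symm

theorem prod_filter_lt_sub_eq_det_vandermonde {r : ℕ} (v : Fin r → R) :
    ∏ p ∈ Finset.univ.filter (fun p : Fin r × Fin r => p.1 < p.2), (v p.2 - v p.1) =
      (Matrix.vandermonde v).det := by
  simp only [Matrix.det_vandermonde, Finset.prod_filter, Fintype.prod_prod_type,
    ← Finset.filter_lt_eq_Ioi]

theorem coeff_prod_sum_of_natDegree_le {ι : Type*} (s : Finset ι) {f : ι → R[X]} {d : ι → ℕ}
    (h : ∀ i ∈ s, (f i).natDegree ≤ d i) :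
    (∏ i ∈ s, f i).coeff (∑ i ∈ s, d i) = ∏ i ∈ s, (f i).coeff (d i) := by
  classical
  induction s using Finset.induction_on with
  | empty => simp
  | insert a s ha ih =>
    obtain ⟨hda, hds⟩ := Finset.forall_mem_insert _ _ _ |>.mp h
    rw [Finset.prod_insert ha, Finset.sum_insert ha, Finset.prod_insert ha, ← ih hds]
    exact coeff_mul_add_eq_of_natDegree_le hda
      ((natDegree_prod_le s f).trans (Finset.sum_le_sum hds))

variable {ι : Type*} [Fintype ι] [DecidableEq ι] {M : Matrix ι ι R[X]} {d : ι → ℕ}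

theorem natDegree_det_le_sum_of_natDegree_le (h : ∀ i j, (M i j).natDegree ≤ d j) :
    M.det.natDegree ≤ ∑ j, d j := by
  rw [Matrix.det_apply]
  refine natDegree_sum_le_of_forall_le _ _ fun σ _ => (natDegree_smul_le _ _).trans ?_
  exact (natDegree_prod_le _ _).trans (Finset.sum_le_sum fun j _ => h (σ j) j)

theorem coeff_det_sum_of_natDegree_le (h : ∀ i j, (M i j).natDegree ≤ d j) :
    M.det.coeff (∑ j, d j) = (Matrix.of fun i j => (M i j).coeff (d j)).det := by
  simp only [Matrix.det_apply, finsetSum_coeff, coeff_smul, Matrix.of_apply]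
  refine Finset.sum_congr rfl fun σ _ => ?_
  rw [coeff_prod_sum_of_natDegree_le Finset.univ fun j _ => h (σ j) j]

theorem leadingCoeff_det_of_natDegree_le (h : ∀ i j, (M i j).natDegree ≤ d j)
    (hdet : (Matrix.of fun i j => (M i j).coeff (d j)).det ≠ 0) :
    M.det.leadingCoeff = (Matrix.of fun i j => (M i j).coeff (d j)).det := by
  rw [← coeff_det_sum_of_natDegree_le h] at hdet ⊢
  rw [leadingCoeff,
    natDegree_eq_of_le_of_coeff_ne_zero (natDegree_det_le_sum_of_natDegree_le h) hdet]

end Determinant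

section Toeplitz

variable {R : Type*} [CommRing R]

/-- The `r × r` Toeplitz matrix of a power series `f`, shifted by `s`: its entry at `(i, j)` is the
coefficient of `t ^ (s + j - i)` in `f`. Writing it as a coefficient of `X ^ i * f` makes it vanish
when `s + j < i`, in spite of truncated subtraction. -/
noncomputable def toeplitz (f : PowerSeries R) (s r : ℕ) : Matrix (Fin r) (Fin r) R :=
  Matrix.of fun i j => PowerSeries.coeff (s + j) (PowerSeries.X ^ (i : ℕ) * f)

theorem coeff_mul_eq_sum_fin (f g : PowerSeries R) {N : ℕ} (j : Fin N) :
    PowerSeries.coeff j (f * g) = ∑ k : Fin N,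
      PowerSeries.coeff k f * PowerSeries.coeff j (PowerSeries.X ^ (k : ℕ) * g) := by
  rw [Fin.sum_univ_eq_sum_range
      (fun k => PowerSeries.coeff k f * PowerSeries.coeff j (PowerSeries.X ^ k * g)),
    PowerSeries.coeff_mul, Finset.Nat.sum_antidiagonal_eq_sum_range_succ_mk]
  simp only [PowerSeries.coeff_X_pow_mul', mul_ite, mul_zero, ← Finset.sum_filter]
  congr 1
  ext k
  simp only [Finset.mem_range, Finset.mem_filter]
  lia

theorem toeplitz_zero_mul (f g : PowerSeries R) (N : ℕ) :
    toeplitz f 0 N * toeplitz g 0 N = toeplitz (f * g) 0 N := by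
  ext i j
  simp only [toeplitz, Matrix.mul_apply, Matrix.of_apply, zero_add, ← mul_assoc,
    ← coeff_mul_eq_sum_fin]

theorem toeplitz_one (N : ℕ) : toeplitz (1 : PowerSeries R) 0 N = 1 := by
  ext i j
  simp only [toeplitz, Matrix.of_apply, zero_add, mul_one, PowerSeries.coeff_X_pow,
    Matrix.one_apply, Fin.ext_iff, eq_comm]

theorem associated_det_toeplitz_of_mul_eq_one {f g : PowerSeries R} (h : f * g = 1) (m n : ℕ) :
    Associated (toeplitz f n m).det (toeplitz g m n).det := by
  let rows : Fin m ⊕ Fin n ≃ Fin (m + n) := finSumFinEquiv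
  let cols : Fin m ⊕ Fin n ≃ Fin (m + n) :=
    (Equiv.sumComm _ _).trans (finSumFinEquiv.trans (finCongr (add_comm n m)))
  let M := (toeplitz f 0 (m + n)).submatrix rows cols
  let N := (toeplitz g 0 (m + n)).submatrix cols rows
  have hMN : M * N = 1 := by
    rw [Matrix.submatrix_mul_equiv, toeplitz_zero_mul, h, toeplitz_one, Matrix.submatrix_one_equiv]
  have hM : M.toBlocks₁₁ = toeplitz f n m := by
    ext i j
    simp [M, rows, cols, toeplitz, Matrix.toBlocks₁₁, add_comm]
  have hN : N.toBlocks₂₂ = toeplitz g m n := by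
    ext i j
    simp [N, rows, cols, toeplitz, Matrix.toBlocks₂₂]
  rw [← hM, ← hN, det_toBlocks₁₁_eq_det_mul_det_toBlocks₂₂ hMN]
  exact associated_unit_mul_left _ _ (Matrix.isUnit_det_of_right_inverse hMN)

end Toeplitz

section BinomialSeries

variable {R : Type*} [CommRing R] [BinomialRing R]

theorem add_one_mul_ringChoose_add_one (r : R) (k : ℕ) :
    ((k : R) + 1) * Ring.choose r (k + 1) = (r - k) * Ring.choose r k := by
  have h := Ring.choose_smul_choose r (Nat.le_add_right k 1)
  rw [Nat.choose_succ_self_right, Nat.add_sub_cancel_left, Ring.choose_one_right, nsmul_eq_mul] at h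
  rw [mul_comm (r - k), ← h]
  push_cast
  ring

theorem one_add_X_mul_derivative_binomialSeries (A : Type*) [CommRing A] [Algebra R A] (r : R) :
    (1 + PowerSeries.X) * PowerSeries.derivative A (PowerSeries.binomialSeries A r) =
      PowerSeries.C (algebraMap R A r) * PowerSeries.binomialSeries A r := by
  ext k
  have hchoose := congrArg (algebraMap R A) (add_one_mul_ringChoose_add_one r k)
  simp only [map_mul, map_add, map_sub, map_natCast, map_one] at hchoose
  rw [add_mul, one_mul, map_add, PowerSeries.coeff_C_mul]
  cases k with
  | zero =>
    simp [PowerSeries.coeff_derivative, Algebra.smul_def]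
  | succ k =>
    simp only [PowerSeries.coeff_succ_X_mul, PowerSeries.coeff_derivative,
      PowerSeries.binomialSeries_coeff, Algebra.smul_def, mul_one]
    push_cast at hchoose ⊢
    linear_combination hchoose

end BinomialSeries

section RescaleExp

theorem derivative_rescale_exp {A : Type*} [CommRing A] [Algebra ℚ A] (u : A) :
    PowerSeries.derivative A (PowerSeries.rescale u (PowerSeries.exp A)) =
      PowerSeries.C u * PowerSeries.rescale u (PowerSeries.exp A) := by
  ext k
  have hexp := congrArg (PowerSeries.coeff k) (PowerSeries.derivative_exp A)
  rw [PowerSeries.coeff_derivative] at hexp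
  rw [PowerSeries.coeff_derivative, PowerSeries.coeff_C_mul, PowerSeries.coeff_rescale,
    PowerSeries.coeff_rescale, ← hexp]
  ring

theorem derivative_coeff_rescale_exp {R : Type*} [CommRing R] [Algebra ℚ R] (u : R[X])
    (k : ℕ) :
    derivative (PowerSeries.coeff (k + 1) (PowerSeries.rescale u (PowerSeries.exp R[X]))) =
      derivative u * PowerSeries.coeff k (PowerSeries.rescale u (PowerSeries.exp R[X])) := by
  have hexp := congrArg (PowerSeries.coeff k) (PowerSeries.derivative_exp R[X])
  rw [PowerSeries.coeff_derivative] at hexp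
  rw [PowerSeries.coeff_rescale, PowerSeries.coeff_rescale, ← hexp, PowerSeries.coeff_exp,
    derivative_mul, derivative_pow_succ, IsScalarTower.algebraMap_apply ℚ R R[X],
    Polynomial.algebraMap_eq, derivative_C]
  simp only [C_add, C_1, C_eq_natCast]
  ring

end RescaleExp

section ExpBinomialSeries

variable {R A : Type*} [CommRing R] [BinomialRing R] [CommRing A] [Algebra R A] [Algebra ℚ A]

/-- The power series `(1 + t) ^ r * exp (u * t)`, the generating function of the Laguerre
polynomials `L_k^(r - k)(x)` when `u = -x`. -/
noncomputable def expBinomialSeries (r : R) (u : A) : PowerSeries A :=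
  PowerSeries.binomialSeries A r * PowerSeries.rescale u (PowerSeries.exp A)

theorem expBinomialSeries_zero_zero : expBinomialSeries (0 : R) (0 : A) = 1 := by
  simp [expBinomialSeries]

theorem expBinomialSeries_mul (r s : R) (u v : A) :
    expBinomialSeries r u * expBinomialSeries s v = expBinomialSeries (r + s) (u + v) := by
  rw [expBinomialSeries, expBinomialSeries, mul_mul_mul_comm, ← PowerSeries.binomialSeries_add,
    PowerSeries.exp_mul_exp_eq_exp_add, expBinomialSeries]

theorem expBinomialSeries_mul_neg (r : R) (u : A) :
    expBinomialSeries r u * expBinomialSeries (-r) (-u) = 1 := by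
  rw [expBinomialSeries_mul, add_neg_cancel, add_neg_cancel, expBinomialSeries_zero_zero]

theorem expBinomialSeries_add_natCast (r : R) (u : A) (j : ℕ) :
    expBinomialSeries (r + j) u = (1 + PowerSeries.X) ^ j * expBinomialSeries r u := by
  rw [expBinomialSeries, add_comm, PowerSeries.binomialSeries_add, PowerSeries.binomialSeries_nat,
    mul_assoc, expBinomialSeries]

theorem coeff_zero_expBinomialSeries (r : R) (u : A) :
    PowerSeries.coeff 0 (expBinomialSeries r u) = 1 := by
  rw [PowerSeries.coeff_zero_eq_constantCoeff_apply, expBinomialSeries, map_mul,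
    PowerSeries.binomialSeries_constantCoeff, one_mul,
    ← PowerSeries.coeff_zero_eq_constantCoeff_apply, PowerSeries.coeff_rescale, pow_zero, one_mul,
    PowerSeries.coeff_zero_eq_constantCoeff_apply, PowerSeries.constantCoeff_exp]

theorem map_expBinomialSeries {B : Type*} [CommRing B] [Algebra R B] [Algebra ℚ B]
    (φ : A →ₐ[R] B) (r : R) (u : A) :
    PowerSeries.map (φ : A →+* B) (expBinomialSeries r u) = expBinomialSeries r (φ u) := by
  have hbinom : PowerSeries.map (φ : A →+* B) (PowerSeries.binomialSeries A r) =
      PowerSeries.binomialSeries B r := by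
    ext k
    simp
  rw [expBinomialSeries, map_mul, hbinom, ← PowerSeries.rescale_map, PowerSeries.map_exp,
    expBinomialSeries, RingHom.coe_coe]

theorem one_add_X_mul_derivative_expBinomialSeries (r : R) (u : A) :
    (1 + PowerSeries.X) * PowerSeries.derivative A (expBinomialSeries r u) =
      PowerSeries.C (algebraMap R A r + u) * expBinomialSeries r u +
        PowerSeries.X * (PowerSeries.C u * expBinomialSeries r u) := by
  have hbinom := one_add_X_mul_derivative_binomialSeries A r
  rw [expBinomialSeries, Derivation.leibniz, derivative_rescale_exp, map_add]
  simp only [smul_eq_mul]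
  linear_combination PowerSeries.rescale u (PowerSeries.exp A) * hbinom

theorem coeff_one_expBinomialSeries (r : R) (u : A) :
    PowerSeries.coeff 1 (expBinomialSeries r u) = algebraMap R A r + u := by
  have h := congrArg (PowerSeries.coeff 0) (one_add_X_mul_derivative_expBinomialSeries r u)
  rw [add_mul, one_mul, map_add, map_add, PowerSeries.coeff_zero_X_mul,
    PowerSeries.coeff_zero_X_mul, PowerSeries.coeff_derivative, PowerSeries.coeff_C_mul,
    coeff_zero_expBinomialSeries] at h
  simpa using h

theorem add_two_mul_coeff_add_two_expBinomialSeries (r : R) (u : A) (k : ℕ) :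
    ((k : A) + 2) * PowerSeries.coeff (k + 2) (expBinomialSeries r u) =
      (algebraMap R A r - k - 1 + u) * PowerSeries.coeff (k + 1) (expBinomialSeries r u) +
        u * PowerSeries.coeff k (expBinomialSeries r u) := by
  have h := congrArg (PowerSeries.coeff (k + 1)) (one_add_X_mul_derivative_expBinomialSeries r u)
  rw [add_mul, one_mul, map_add, map_add, PowerSeries.coeff_succ_X_mul,
    PowerSeries.coeff_succ_X_mul, PowerSeries.coeff_derivative, PowerSeries.coeff_derivative,
    PowerSeries.coeff_C_mul, PowerSeries.coeff_C_mul] at h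
  push_cast at h
  linear_combination h

theorem coeff_succ_expBinomialSeries_add_one (r : R) (u : A) (k : ℕ) :
    PowerSeries.coeff (k + 1) (expBinomialSeries (r + 1) u) =
      PowerSeries.coeff (k + 1) (expBinomialSeries r u) +
        PowerSeries.coeff k (expBinomialSeries r u) := by
  have h := expBinomialSeries_add_natCast r u 1
  rw [Nat.cast_one, pow_one] at h
  rw [h, add_mul, one_mul, map_add, PowerSeries.coeff_succ_X_mul]

end ExpBinomialSeries

section DerivativeInParameter

variable {R : Type*} [CommRing R] [BinomialRing R] [Algebra ℚ R]

theorem derivative_coeff_succ_expBinomialSeries (r : R) (u : R[X]) (k : ℕ) :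
    derivative (PowerSeries.coeff (k + 1) (expBinomialSeries r u)) =
      derivative u * PowerSeries.coeff k (expBinomialSeries r u) := by
  have hzero : derivative (PowerSeries.coeff 0
      (PowerSeries.rescale u (PowerSeries.exp R[X]))) = 0 := by
    simp [PowerSeries.coeff_rescale]
  rw [expBinomialSeries, PowerSeries.coeff_mul, PowerSeries.coeff_mul,
    Finset.Nat.sum_antidiagonal_succ', derivative_add, derivative_sum, Finset.mul_sum]
  simp only [PowerSeries.binomialSeries_coeff, smul_mul_assoc, one_mul, derivative_smul,
    derivative_coeff_rescale_exp, mul_smul_comm, hzero, smul_zero, zero_add]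

theorem iterate_derivative_coeff_expBinomialSeries (r : R) {u : R[X]} {c : R}
    (hu : derivative u = C c) (i k : ℕ) :
    derivative^[i] (PowerSeries.coeff k (expBinomialSeries r u)) =
      C (c ^ i) * PowerSeries.coeff k (PowerSeries.X ^ i * expBinomialSeries r u) := by
  induction i generalizing k with
  | zero => simp
  | succ i ih =>
    rw [Function.iterate_succ_apply]
    cases k with
    | zero => simp [coeff_zero_expBinomialSeries, pow_succ']
    | succ k =>
      rw [derivative_coeff_succ_expBinomialSeries, hu, iterate_derivative_C_mul, ih, pow_succ',
        pow_succ' PowerSeries.X, mul_assoc PowerSeries.X, PowerSeries.coeff_succ_X_mul, C_mul,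
        mul_assoc]

end DerivativeInParameter

section OneAddXPow

variable {R : Type*} [CommRing R]

theorem coeff_one_add_X_pow_mul (f : PowerSeries R) (n : ℕ) {j m : ℕ} (hj : j < m) :
    PowerSeries.coeff (n + j) ((1 + PowerSeries.X) ^ j * f) =
      ∑ l : Fin m, (j.choose l : R) * PowerSeries.coeff (n + l) f := by
  rw [Fin.sum_univ_eq_sum_range (fun l => (j.choose l : R) * PowerSeries.coeff (n + l) f),
    ← Finset.sum_subset (Finset.range_subset_range.mpr hj) (fun l _ hl => by
      rw [Nat.choose_eq_zero_of_lt (by simpa using hl), Nat.cast_zero, zero_mul]),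
    add_pow, Finset.sum_mul, map_sum]
  refine Finset.sum_congr rfl fun l hl => ?_
  have hlj : n + j = n + l + (j - l) := by grind
  rw [one_pow, one_mul, mul_right_comm, mul_comm, hlj, ← map_natCast (PowerSeries.C (R := R)),
    PowerSeries.coeff_C_mul, PowerSeries.coeff_X_pow_mul]

end OneAddXPow

section IterateDerivative

theorem natDegree_X_pow_mul_iterate_derivative_le {R : Type*} [Semiring R] (p : R[X]) (i : ℕ) :
    (X ^ i * derivative^[i] p).natDegree ≤ p.natDegree := by
  rcases lt_or_ge p.natDegree i with hi | hi
  · rw [iterate_derivative_eq_zero hi, mul_zero, natDegree_zero]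
    exact Nat.zero_le _
  · calc (X ^ i * derivative^[i] p).natDegree
        ≤ i + (p.natDegree - i) :=
          natDegree_mul_le_of_le (natDegree_X_pow_le i) (natDegree_iterate_derivative p i)
      _ = p.natDegree := Nat.add_sub_cancel' hi

theorem coeff_natDegree_X_pow_mul_iterate_derivative {R : Type*} [Semiring R] (p : R[X]) (i : ℕ) :
    (X ^ i * derivative^[i] p).coeff p.natDegree =
      p.natDegree.descFactorial i • p.leadingCoeff := by
  rw [coeff_X_pow_mul']
  split_ifs with hi
  · rw [coeff_iterate_derivative, Nat.sub_add_cancel hi, coeff_natDegree]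
  · rw [Nat.descFactorial_of_lt (not_le.mp hi), zero_smul]

variable {R : Type*} [Semiring R] [IsAddTorsionFree R] {p : R[X]} {n : ℕ}

theorem natDegree_le_of_iterate_derivative_eq_C {c : R} (h : derivative^[n] p = C c) :
    p.natDegree ≤ n := by
  rw [natDegree_le_iff_coeff_eq_zero]
  intro k hk
  have hcoeff := coeff_iterate_derivative (k := n) p (k - n)
  rw [h, coeff_C_of_ne_zero (Nat.sub_ne_zero_of_lt hk), Nat.sub_add_cancel hk.le, eq_comm,
    nsmul_eq_zero_iff] at hcoeff
  exact hcoeff.resolve_right (Nat.descFactorial_eq_zero_iff_lt.not.mpr hk.not_gt)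

theorem coeff_eq_one_of_iterate_derivative_eq_C_factorial
    (h : derivative^[n] p = C (n.factorial : R)) : p.coeff n = 1 := by
  have hcoeff := coeff_iterate_derivative (k := n) p 0
  rw [h, coeff_C_zero, zero_add, Nat.descFactorial_self, ← nsmul_one,
    nsmul_right_inj n.factorial_ne_zero] at hcoeff
  exact hcoeff.symm

end IterateDerivative

section Wronskian

theorem associated_wr_comp_perm {r : ℕ} (σ : Equiv.Perm (Fin r)) (p : Fin r → ℝ[X]) :
    Associated (Wr (p ∘ σ)) (Wr p) := by
  have hsubmatrix : (Matrix.of fun i j : Fin r => derivative^[(i : ℕ)] ((p ∘ σ) j)) =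
      (Matrix.of fun i j : Fin r => derivative^[(i : ℕ)] (p j)).submatrix id σ := rfl
  rw [Wr, hsubmatrix, Matrix.det_permute']
  exact associated_unit_mul_left _ _ ((Equiv.Perm.sign σ).isUnit.map (Int.castRingHom ℝ[X]))

theorem associated_wr_rev (p : ℕ → ℝ[X]) (s r : ℕ) :
    Associated (Wr fun j : Fin r => p (s + r - 1 - j)) (Wr fun j : Fin r => p (s + j)) := by
  have hrev : (fun j : Fin r => p (s + r - 1 - j)) =
      (fun j : Fin r => p (s + j)) ∘ Fin.revPerm := by
    ext1 j
    simp only [Function.comp_apply, Fin.revPerm_apply, Fin.val_rev]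
    congr 1
    lia
  rw [hrev]
  exact associated_wr_comp_perm _ _

theorem wr_sum_C_mul {r : ℕ} (U : Matrix (Fin r) (Fin r) ℝ) (p : Fin r → ℝ[X]) :
    Wr (fun j => ∑ l, C (U l j) * p l) = Wr p * C U.det := by
  rw [Wr, Wr, RingHom.map_det, ← Matrix.det_mul]
  congr 1
  ext1 i j
  simp only [Matrix.mul_apply, Matrix.of_apply, iterate_derivative_sum, iterate_derivative_C_mul,
    RingHom.mapMatrix_apply, Matrix.map_apply]
  exact Finset.sum_congr rfl fun l _ => mul_comm _ _

theorem wr_C_mul {r : ℕ} (c : Fin r → ℝ) (p : Fin r → ℝ[X]) :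
    Wr (fun j => C (c j) * p j) = Wr p * C (∏ j, c j) := by
  rw [← Matrix.det_diagonal, ← wr_sum_C_mul]
  simp [Matrix.diagonal_apply, apply_ite C, ite_mul]

theorem leadingCoeff_wr_of_monic {r : ℕ} {p : Fin r → ℝ[X]} (hp : ∀ j, (p j).Monic)
    (hinj : Function.Injective fun j => (p j).natDegree) :
    (Wr p).leadingCoeff = (Matrix.vandermonde fun j => ((p j).natDegree : ℝ)).det := by
  have hvandermonde : (Matrix.vandermonde fun j => ((p j).natDegree : ℝ)).det ≠ 0 :=
    Matrix.det_vandermonde_ne_zero_iff.mpr (Nat.cast_injective.comp hinj)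
  -- Multiplying row `i` by `X ^ i` makes the degrees independent of the row.
  let M : Matrix (Fin r) (Fin r) ℝ[X] :=
    Matrix.of fun i j => X ^ (i : ℕ) * derivative^[(i : ℕ)] (p j)
  have hM : M.det = X ^ (∑ i : Fin r, (i : ℕ)) * Wr p := by
    rw [Wr, ← Finset.prod_pow_eq_pow_sum, ← Matrix.det_mul_column]
    rfl
  have hdegree (i j : Fin r) : (M i j).natDegree ≤ (p j).natDegree :=
    natDegree_X_pow_mul_iterate_derivative_le (p j) i
  have hcoeff : (Matrix.of fun i j => (M i j).coeff (p j).natDegree).det =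
      (Matrix.vandermonde fun j => ((p j).natDegree : ℝ)).det := by
    rw [Matrix.det_eval_matrixOfPolynomials_eq_det_vandermonde _
      (fun i => descPochhammer ℝ i) (fun i => descPochhammer_natDegree ℝ i)
      (fun i => monic_descPochhammer ℝ i), ← Matrix.det_transpose]
    congr 1
    ext j i
    simp [M, coeff_natDegree_X_pow_mul_iterate_derivative, (hp j).leadingCoeff,
      descPochhammer_eval_eq_descFactorial]
  have hlead := leadingCoeff_det_of_natDegree_le hdegree (hcoeff ▸ hvandermonde)
  rwa [hM, hcoeff, leadingCoeff_mul, leadingCoeff_X_pow, one_mul] at hlead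

theorem associated_wr_coeff_expBinomialSeries (r : ℝ) {u : ℝ[X]} {c : ℝ}
    (hu : derivative u = C c) (hc : c ≠ 0) (s N : ℕ) :
    Associated (Wr fun j : Fin N => PowerSeries.coeff (s + j) (expBinomialSeries r u))
      (toeplitz (expBinomialSeries r u) s N).det := by
  have hrows : (Matrix.of fun i j : Fin N =>
      derivative^[(i : ℕ)] (PowerSeries.coeff (s + j) (expBinomialSeries r u))) =
      Matrix.of fun i j : Fin N => C (c ^ (i : ℕ)) * toeplitz (expBinomialSeries r u) s N i j := by
    ext1 i j
    exact iterate_derivative_coeff_expBinomialSeries r hu i (s + j)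
  rw [Wr, hrows, Matrix.det_mul_column, ← map_prod]
  refine associated_unit_mul_left _ _ (isUnit_C.mpr (IsUnit.mk0 _ ?_))
  exact Finset.prod_ne_zero_iff.mpr fun i _ => pow_ne_zero _ hc

end Wronskian

section Laguerre

theorem lag_eq_coeff_expBinomialSeries (α : ℝ) :
    ∀ k : ℕ, Lag α k = PowerSeries.coeff k (expBinomialSeries (α + k) (-X : ℝ[X]))
  | 0 => by rw [Lag, coeff_zero_expBinomialSeries]
  | 1 => by
    rw [Lag, coeff_one_expBinomialSeries, Nat.cast_one, Polynomial.algebraMap_eq, sub_eq_add_neg]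
  | k + 2 => by
    let f := expBinomialSeries (α + k) (-X : ℝ[X])
    have hrec := add_two_mul_coeff_add_two_expBinomialSeries (α + k) (-X : ℝ[X]) k
    have hinv : ((k : ℝ[X]) + 2) * C (1 / ((k : ℝ) + 2)) = 1 := by
      rw [← C_eq_natCast, ← C_ofNat, ← C_add, ← C_mul, mul_one_div_cancel (by positivity), C_1]
    have hcoeff₁ : PowerSeries.coeff (k + 1) (expBinomialSeries (α + (k + 1 : ℕ)) (-X : ℝ[X])) =
        PowerSeries.coeff (k + 1) f + PowerSeries.coeff k f := by
      rw [Nat.cast_succ, ← add_assoc, coeff_succ_expBinomialSeries_add_one]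
    have hcoeff₂ : PowerSeries.coeff (k + 2) (expBinomialSeries (α + (k + 2 : ℕ)) (-X : ℝ[X])) =
        PowerSeries.coeff (k + 2) f + 2 * PowerSeries.coeff (k + 1) f + PowerSeries.coeff k f := by
      rw [Nat.cast_succ, Nat.cast_succ, ← add_assoc, ← add_assoc]
      simp only [coeff_succ_expBinomialSeries_add_one]
      ring
    have hconst : C (1 + (α - 1) / ((k : ℝ) + 2)) = 1 + C (α - 1) * C (1 / ((k : ℝ) + 2)) := by
      rw [← C_mul, ← C_1, ← C_add, mul_one_div]
    rw [Lag, lag_eq_coeff_expBinomialSeries α k, lag_eq_coeff_expBinomialSeries α (k + 1), hcoeff₁,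
      hcoeff₂, hconst]
    have hne : (k : ℝ[X]) + 2 ≠ 0 := left_ne_zero_of_mul_eq_one hinv
    apply mul_left_cancel₀ hne
    simp only [Polynomial.algebraMap_eq, C_add, C_sub, C_1, C_ofNat, C_eq_natCast] at hrec ⊢
    linear_combination -hrec +
      ((C α - 1 - X) * PowerSeries.coeff (k + 1) f - X * PowerSeries.coeff k f) * hinv

theorem lmod_eq_coeff_expBinomialSeries (β : ℝ) (k : ℕ) :
    lmod β k = C (k.factorial : ℝ) * PowerSeries.coeff k (expBinomialSeries β (X : ℝ[X])) := by
  have hcomp := congrArg (PowerSeries.coeff k)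
    (map_expBinomialSeries (aeval (-X : ℝ[X])) β (-X : ℝ[X]))
  simp only [PowerSeries.coeff_map, map_neg, aeval_X, neg_neg] at hcomp
  rw [lmod, lag_eq_coeff_expBinomialSeries, sub_add_cancel, smul_eq_C_mul, ← hcomp]
  rfl

theorem iterate_derivative_lmod_self (β : ℝ) (k : ℕ) :
    derivative^[k] (lmod β k) = C (k.factorial : ℝ) := by
  rw [lmod_eq_coeff_expBinomialSeries, iterate_derivative_C_mul,
    iterate_derivative_coeff_expBinomialSeries β (c := 1) (by simp), PowerSeries.coeff_X_pow_mul',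
    if_pos le_rfl, Nat.sub_self, coeff_zero_expBinomialSeries, one_pow, C_1, mul_one, mul_one]

theorem monic_lmod (β : ℝ) (k : ℕ) : (lmod β k).Monic :=
  monic_of_natDegree_le_of_coeff_eq_one k
    (natDegree_le_of_iterate_derivative_eq_C (iterate_derivative_lmod_self β k))
    (coeff_eq_one_of_iterate_derivative_eq_C_factorial (iterate_derivative_lmod_self β k))

theorem natDegree_lmod (β : ℝ) (k : ℕ) : (lmod β k).natDegree = k := by
  apply natDegree_eq_of_le_of_coeff_ne_zero
    (natDegree_le_of_iterate_derivative_eq_C (iterate_derivative_lmod_self β k))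
  rw [coeff_eq_one_of_iterate_derivative_eq_C_factorial (iterate_derivative_lmod_self β k)]
  exact one_ne_zero

theorem det_choose (m : ℕ) : (Matrix.of fun l j : Fin m => ((j : ℕ).choose l : ℝ)).det = 1 := by
  rw [Matrix.det_of_isUpperTriangular]
  · simp
  · intro i j hij
    simp [Nat.choose_eq_zero_of_lt (show (j : ℕ) < i from hij)]

theorem wr_lag (α : ℝ) (m n : ℕ) :
    Wr (fun j : Fin m => Lag α (n + j)) = Wr fun j : Fin m =>
      PowerSeries.coeff (n + j) (expBinomialSeries (α + n) (-X : ℝ[X])) := by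
  let U : Matrix (Fin m) (Fin m) ℝ := Matrix.of fun l j => ((j : ℕ).choose l : ℝ)
  have hlag (j : Fin m) : Lag α (n + j) =
      ∑ l, C (U l j) * PowerSeries.coeff (n + l) (expBinomialSeries (α + n) (-X : ℝ[X])) := by
    rw [lag_eq_coeff_expBinomialSeries, Nat.cast_add, ← add_assoc, expBinomialSeries_add_natCast,
      coeff_one_add_X_pow_mul _ _ j.isLt]
    simp [U]
  simp only [hlag, wr_sum_C_mul, U, det_choose, C_1, mul_one]

theorem associated_wr_lmod (β : ℝ) (m n : ℕ) :
    Associated (Wr fun j : Fin n => lmod β (m + j)) (Wr fun j : Fin n =>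
      PowerSeries.coeff (m + j) (expBinomialSeries β (X : ℝ[X]))) := by
  simp only [lmod_eq_coeff_expBinomialSeries]
  rw [wr_C_mul fun j : Fin n => ((m + j).factorial : ℝ)]
  refine associated_mul_unit_left _ _ (isUnit_C.mpr (IsUnit.mk0 _ ?_))
  positivity

theorem associated_wr_lag_wr_lmod (α : ℝ) (m n : ℕ) :
    Associated (Wr fun j : Fin m => Lag α (n + m - 1 - j))
      (Wr fun j : Fin n => lmod (-α - n) (m + n - 1 - j)) := by
  have hinv : expBinomialSeries (α + n) (-X : ℝ[X]) * expBinomialSeries (-α - n) X = 1 := by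
    simpa [← neg_add'] using expBinomialSeries_mul_neg (α + n) (-X : ℝ[X])
  calc Associated (Wr fun j : Fin m => Lag α (n + m - 1 - j))
        (Wr fun j : Fin m => Lag α (n + j)) := associated_wr_rev (Lag α) n m
    _ = _ := wr_lag α m n
    Associated _ (toeplitz (expBinomialSeries (α + n) (-X)) n m).det :=
      associated_wr_coeff_expBinomialSeries (c := -1) _ (by simp) (by simp) n m
    Associated _ (toeplitz (expBinomialSeries (-α - n) X) m n).det :=
      associated_det_toeplitz_of_mul_eq_one hinv m n
    Associated _ _ :=
      (associated_wr_coeff_expBinomialSeries (c := 1) _ (by simp) (by simp) m n).symm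
    Associated _ _ := (associated_wr_lmod _ m n).symm
    Associated _ _ := (associated_wr_rev (lmod (-α - n)) m n).symm

theorem leadingCoeff_wr_lmod (β : ℝ) (m n : ℕ) :
    (Wr fun j : Fin n => lmod β (m + n - 1 - j)).leadingCoeff =
      (Matrix.vandermonde fun j : Fin n => ((m + n - 1 - j : ℕ) : ℝ)).det := by
  rw [leadingCoeff_wr_of_monic fun j => monic_lmod β _]
  · simp only [natDegree_lmod]
  · intro i j hij
    simp only [natDegree_lmod] at hij
    lia

end Laguerre

theorem C_inv_leadingCoeff_mul_eq_of_associated {K : Type*} [Field K] {p q : K[X]}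
    (h : Associated p q) : C p.leadingCoeff⁻¹ * p = C q.leadingCoeff⁻¹ * q := by
  obtain ⟨u, rfl⟩ := h
  obtain ⟨c, hc, hu⟩ := isUnit_iff.mp u.isUnit
  have hcancel : C c⁻¹ * C c = 1 := by rw [← C_mul, inv_mul_cancel₀ hc.ne_zero, C_1]
  rw [← hu, leadingCoeff_mul, leadingCoeff_C, mul_inv, C_mul, mul_mul_mul_comm, hcancel, mul_one]

/-- For the rectangular partition `λ = (n,…,n)` with `m` rows (degree vector `n_i = n+m-i`),
the monic Wronskian `L_λ^(α)` of the classical Laguerre polynomials equals the Wronskian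
Laguerre polynomial `l_{λ'}^(-α-n)` of the conjugate rectangle `λ' = (m,…,m)` with `n` rows
(degree vector `n'_i = m+n-i`), the latter normalized by `∏_{i<j}(n'_j - n'_i)`. -/
theorem stmt17 (α : ℝ) (m n : ℕ) (hm : 0 < m) (hn : 0 < n) :
    C (Wr (fun i : Fin m => Lag α (n + m - 1 - (i : ℕ)))).leadingCoeff⁻¹
        * Wr (fun i : Fin m => Lag α (n + m - 1 - (i : ℕ)))
      = C (∏ p ∈ Finset.univ.filter (fun p : Fin n × Fin n => p.1 < p.2),
            (((m + n - 1 - (p.2 : ℕ) : ℕ) : ℝ) - ((m + n - 1 - (p.1 : ℕ) : ℕ) : ℝ)))⁻¹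
        * Wr (fun i : Fin n => lmod (-α - (n : ℝ)) (m + n - 1 - (i : ℕ))) := by
  rw [prod_filter_lt_sub_eq_det_vandermonde fun j : Fin n => ((m + n - 1 - (j : ℕ) : ℕ) : ℝ),
    ← leadingCoeff_wr_lmod (-α - n) m n]
  exact C_inv_leadingCoeff_mul_eq_of_associated (associated_wr_lag_wr_lmod α m n)
end
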